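/- arXiv:0906.4853 — 2 statements merged into one kernel-verified Lean document; each statement's English description precedes it below -/
import Mathlib

section
/- Let r ≥ 1 and 1 ≤ k ≤ r, and let a, b be maps from the nonempty subsets of {1,…,r} to (0,∞) such that a(J) = 1 and b(J) = |J| whenever |J| ≤ k, and such that b is increasing. Then there exists a copula c of order k on [0,1]^r whose tail characteristic equals (a,b): for every nonempty J ⊆ {1,…,r}, td_J(c) = b(J) and tc_J(c) = a(J). -/
open MeasureTheory Filter
open scoped ENNReal BigOperators

noncomputable section

/-- The unit cube `[0,1]^r`. -/
def cube (r : ℕ) : Set (Fin r → ℝ) := Set.univ.pi fun _ => Set.Icc (0:ℝ) 1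

/-- A Borel probability measure on `[0,1]^r` is a copula of order `k` if its pushforward
under the coordinate projection to any `k`-element set `J` of coordinates is the Lebesgue
measure on `[0,1]^J`. -/
def IsCopulaOfOrder (r k : ℕ) (c : Measure (Fin r → ℝ)) : Prop :=
  IsProbabilityMeasure c ∧ c (cube r) = 1 ∧
    ∀ J : Finset (Fin r), J.card = k →
      c.map (fun v (i : J) => v i.1) =
        Measure.pi fun _ : J => volume.restrict (Set.Icc (0:ℝ) 1)

/-- `liminf_{s→0+} c_J(s) / s^τ` (in `ℝ≥0∞`), where
`c_J(s) = c {u ∈ [0,1]^r : u_i ≤ s ∀ i ∈ J}`. -/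
def tailLiminf (r : ℕ) (c : Measure (Fin r → ℝ)) (J : Finset (Fin r)) (τ : ℝ) : ℝ≥0∞ :=
  Filter.liminf (fun s : ℝ => c ({v | ∀ i ∈ J, v i ≤ s} ∩ cube r) / ENNReal.ofReal (s ^ τ))
    (nhdsWithin 0 (Set.Ioi 0))

/-- The tail degree `td_J(c)`: the infimum of the exponents `τ ≥ 0` with
`liminf_{s→0+} c_J(s)/s^τ = ∞` (equal to `∞` if there is no such exponent). -/
def tailDeg (r : ℕ) (c : Measure (Fin r → ℝ)) (J : Finset (Fin r)) : ℝ≥0∞ :=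
  sInf {τ : ℝ≥0∞ | tailLiminf r c J τ.toReal = ⊤}

/-- The tail coefficient `tc_J(c) = liminf_{s→0+} c_J(s)/s^{td_J(c)}`. -/
def tailCoef (r : ℕ) (c : Measure (Fin r → ℝ)) (J : Finset (Fin r)) : ℝ≥0∞ :=
  tailLiminf r c J (tailDeg r c J).toReal


/-! ### Part 1: orthogonal arrays -/

lemma vdm_zero {K : Type*} [Field K] {r m : ℕ} (x : Fin r → K) (hx : Function.Injective x)
    (I : Finset (Fin r)) (hI : m ≤ I.card) (a : Fin m → K)
    (h : ∀ i ∈ I, ∑ j, a j * x i ^ (j : ℕ) = 0) : a = 0 := by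
  obtain ⟨I', hI', hc⟩ := Finset.exists_subset_card_eq hI
  let f := I'.orderEmbOfFin hc
  apply Matrix.eq_zero_of_forall_index_sum_mul_pow_eq_zero (f := fun j => x (f j))
    (hx.comp f.injective)
  intro j
  exact h _ (hI' (Finset.orderEmbOfFin_mem I' hc j))

lemma vdm_monic {K : Type*} [Field K] {r m : ℕ} (x : Fin r → K) (hx : Function.Injective x)
    (I : Finset (Fin r)) (hI : m + 1 ≤ I.card) (a : Fin m → K)
    (h : ∀ i ∈ I, x i ^ m + ∑ j, a j * x i ^ (j : ℕ) = 0) : False := by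
  have h0 := vdm_zero x hx I hI (Fin.snoc a 1) (by
    intro i hi
    rw [Fin.sum_univ_castSucc]
    simp only [Fin.snoc_castSucc, Fin.snoc_last, Fin.val_castSucc, Fin.val_last]
    rw [← h i hi]; ring)
  have := congrFun h0 (Fin.last m)
  simp at this

lemma rs_bij {K : Type*} [Field K] [Fintype K] {r k : ℕ} (x : Fin r → K)
    (hx : Function.Injective x) (d : Fin r → K)
    (I : Finset (Fin r)) (hI : I.card = k) :
    Function.Bijective (fun (a : Fin k → K) (i : I) => d i + ∑ j, a j * x i ^ (j : ℕ)) := by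
  classical
  rw [Fintype.bijective_iff_injective_and_card]
  constructor
  · intro a a' h
    rw [← sub_eq_zero]
    apply vdm_zero x hx I hI.ge
    intro i hi
    have := congrFun h ⟨i, hi⟩
    simp only [add_right_inj] at this
    simp only [Pi.sub_apply, sub_mul, Finset.sum_sub_distrib, this, sub_self]
  · simp [hI]

lemma exists_array (r k p n : ℕ) (hp : p.Prime) (hrp : r ≤ p) (J : Finset (Fin r)) :
    ∃ (Ω : Type) (_ : Fintype Ω) (e : Ω → Fin r → Fin (p * p ^ (n + 1))) (ω₀ : Ω),
      (∀ I : Finset (Fin r), I.card = k → Function.Bijective (fun ω (i : I) => e ω i)) ∧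
      (∀ i ∈ J, (e ω₀ i).val = 1) ∧ (∀ i ∉ J, (e ω₀ i).val = p ^ (n + 1) - 1) ∧
      ∀ ω, ω ≠ ω₀ → ∀ Z : Finset (Fin r), k < Z.card → ∃ i ∈ Z, p ^ (n + 1) ≤ (e ω i).val := by
  classical
  have : Fact p.Prime := ⟨hp⟩
  have hp2 := hp.two_le
  set Q := p ^ (n + 1) with hQ
  have hpQ : p ≤ Q := Nat.le_self_pow (by omega) p
  let K := GaloisField p (n + 1)
  have : Fintype K := Fintype.ofFinite K
  have hK : Fintype.card K = Q := by
    rw [← Nat.card_eq_fintype_card]; exact GaloisField.card p (n + 1) (by omega)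
  have hP : Fintype.card (ZMod p) = p := ZMod.card p
  let σ : K ≃ Fin Q := Fintype.equivFinOfCardEq hK
  let τ' : ZMod p ≃ Fin p := Fintype.equivFinOfCardEq hP
  let z : Fin p := ⟨0, hp.pos⟩
  let τ : ZMod p ≃ Fin p := τ'.trans (Equiv.swap (τ' 0) z)
  have hτ : τ 0 = z := by simp [τ]
  let x : Fin r → K := fun i => σ.symm ⟨i, by omega⟩
  have hx : Function.Injective x := by
    intro i j h
    have := σ.symm.injective h
    simp only [Fin.mk.injEq] at this
    exact Fin.ext this
  let y : Fin r → ZMod p := fun i => τ.symm ⟨i, by omega⟩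
  have hy : Function.Injective y := by
    intro i j h
    have := τ.symm.injective h
    simp only [Fin.mk.injEq] at this
    exact Fin.ext this
  let dJ : Fin r → Fin Q := fun i => if i ∈ J then ⟨1, by omega⟩ else ⟨Q - 1, by omega⟩
  let D : (Fin k → K) → Fin r → K := fun a i => σ.symm (dJ i) + ∑ j, a j * x i ^ (j : ℕ)
  let W : (Fin k → K) → (Fin k → ZMod p) → Fin r → ZMod p := fun a g i =>
    (if a = 0 then 0 else y i ^ k) + ∑ j, g j * y i ^ (j : ℕ)
  let e : ((Fin k → K) × (Fin k → ZMod p)) → Fin r → Fin (p * Q) := fun ω i =>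
    finProdFinEquiv (τ (W ω.1 ω.2 i), σ (D ω.1 i))
  have hev : ∀ ω i, (e ω i).val = (σ (D ω.1 i)).val + Q * (τ (W ω.1 ω.2 i)).val := by
    intro ω i; simp [e, finProdFinEquiv]
  refine ⟨_, inferInstance, e, (0, 0), ?_, ?_, ?_, ?_⟩
  · intro I hI
    constructor
    · rintro ⟨a, g⟩ ⟨a', g'⟩ h
      have h1 : ∀ i : I, W a g i = W a' g' i ∧ D a i = D a' i := by
        intro i
        have := finProdFinEquiv.injective (congrFun h i)
        simpa using this
      have ha : a = a' := (rs_bij x hx (fun i => σ.symm (dJ i)) I hI).1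
        (funext fun i => (h1 i).2)
      subst ha
      have hg : g = g' := (rs_bij y hy (fun i => if a = 0 then 0 else y i ^ k) I hI).1
        (funext fun i => (h1 i).1)
      rw [hg]
    · intro t
      obtain ⟨a, ha⟩ := (rs_bij x hx (fun i => σ.symm (dJ i)) I hI).2
        (fun i => σ.symm (finProdFinEquiv.symm (t i)).2)
      obtain ⟨g, hg⟩ := (rs_bij y hy (fun i => if a = 0 then 0 else y i ^ k) I hI).2
        (fun i => τ.symm (finProdFinEquiv.symm (t i)).1)
      refine ⟨(a, g), funext fun i => ?_⟩
      have h1 : D a i = _ := congrFun ha i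
      have h2 : W a g i = _ := congrFun hg i
      simp only [e, h1, h2, Equiv.apply_symm_apply, Prod.mk.eta]
  · intro i hi
    rw [hev]
    simp [D, W, hτ, dJ, hi, z]
  · intro i hi
    rw [hev]
    simp [D, W, hτ, dJ, hi, z]
  · rintro ⟨a, g⟩ hω Z hZ
    by_contra! hcon
    have hW : ∀ i ∈ Z, W a g i = 0 := by
      intro i hi
      have h1 := hcon i hi
      rw [hev] at h1
      apply τ.injective
      rw [hτ]
      apply Fin.ext
      change (τ (W a g i)).val = 0
      by_contra h0
      have : Q * 1 ≤ Q * (τ (W a g i)).val := Nat.mul_le_mul_left _ (by omega)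
      simp only at h1
      omega
    by_cases ha : a = 0
    · subst ha
      apply hω
      have : g = 0 := vdm_zero y hy Z hZ.le g (fun i hi => by simpa [W] using hW i hi)
      rw [this]
    · exact vdm_monic y hy Z hZ g (fun i hi => by simpa [W, ha] using hW i hi)

/-! ### Part 2: grid copulas -/

/-- Uniform distribution on the cell `(j/N, (j+1)/N]`. -/
def cellMeas (N j : ℕ) : Measure ℝ :=
  (N : ℝ≥0∞) • volume.restrict (Set.Ioc ((j : ℝ) / N) ((j + 1 : ℝ) / N))

lemma cell_sum_aux (N : ℕ) (n : ℕ) :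
    ∑ j ∈ Finset.range n, volume.restrict (Set.Ioc ((j : ℝ) / N) ((j + 1 : ℝ) / N)) =
      volume.restrict (Set.Ioc 0 ((n : ℝ) / N)) := by
  induction n with
  | zero => simp
  | succ n ih =>
    rw [Finset.sum_range_succ, ih, ← Measure.restrict_union, Set.Ioc_union_Ioc_eq_Ioc]
    · push_cast; rfl
    · positivity
    · gcongr; linarith
    · exact Set.Ioc_disjoint_Ioc_of_le le_rfl
    · exact measurableSet_Ioc

lemma cell_sum (N : ℕ) (hN : 0 < N) :
    ∑ j : Fin N, (N : ℝ≥0∞)⁻¹ • cellMeas N j = volume.restrict (Set.Icc (0 : ℝ) 1) := by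
  have h : ∀ j : ℕ, (N : ℝ≥0∞)⁻¹ • cellMeas N j =
      volume.restrict (Set.Ioc ((j : ℝ) / N) ((j + 1 : ℝ) / N)) := by
    intro j
    rw [cellMeas, smul_smul, ENNReal.inv_mul_cancel (by simpa using hN.ne') (by simp), one_smul]
  rw [Fin.sum_univ_eq_sum_range (fun j => (N : ℝ≥0∞)⁻¹ • cellMeas N j)]
  simp_rw [h]
  rw [cell_sum_aux, div_self (by positivity)]
  exact restrict_Ioc_eq_restrict_Icc

lemma cell_prob (N j : ℕ) (hN : 0 < N) : IsProbabilityMeasure (cellMeas N j) := by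
  constructor
  have hN' : (0 : ℝ) < N := by exact_mod_cast hN
  rw [cellMeas, Measure.smul_apply, Measure.restrict_apply_univ, Real.volume_Ioc, ← sub_div]
  simp only [add_sub_cancel_left, smul_eq_mul]
  rw [one_div, ENNReal.ofReal_inv_of_pos hN', ENNReal.ofReal_natCast]
  exact ENNReal.mul_inv_cancel (by simpa using hN.ne') (by simp)

lemma cell_Iic_zero (N j : ℕ) (s : ℝ) (hs : s ≤ (j : ℝ) / N) :
    cellMeas N j (Set.Iic s) = 0 := by
  rw [cellMeas, Measure.smul_apply, Measure.restrict_apply measurableSet_Iic]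
  have : Set.Iic s ∩ Set.Ioc ((j : ℝ) / N) ((j + 1 : ℝ) / N) = ∅ := by
    ext x; simp only [Set.mem_inter_iff, Set.mem_Iic, Set.mem_Ioc, Set.mem_empty_iff_false,
      iff_false]; intro h; linarith [h.1, h.2.1]
  simp [this]

lemma cell_one_of (N j : ℕ) (hN : 0 < N) (A : Set ℝ) (hA : MeasurableSet A)
    (hs : Set.Ioc ((j : ℝ) / N) ((j + 1 : ℝ) / N) ⊆ A) :
    cellMeas N j A = 1 := by
  have := (cell_prob N j hN).measure_univ
  rw [← this, cellMeas, Measure.smul_apply, Measure.smul_apply, Measure.restrict_apply hA,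
    Measure.restrict_apply_univ, Set.inter_eq_right.2 hs]

lemma cell_Iic_one (N j : ℕ) (hN : 0 < N) (s : ℝ) (hs : (j + 1 : ℝ) / N ≤ s) :
    cellMeas N j (Set.Iic s) = 1 :=
  cell_one_of N j hN _ measurableSet_Iic fun _ hx => hx.2.trans hs

lemma cell_Icc_one (N : ℕ) (hN : 0 < N) (j : Fin N) :
    cellMeas N j (Set.Icc 0 1) = 1 := by
  apply cell_one_of N j hN _ measurableSet_Icc
  intro x hx
  have hN' : (0 : ℝ) < N := by exact_mod_cast hN
  refine ⟨le_trans (by positivity) hx.1.le, hx.2.trans ?_⟩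
  rw [div_le_one hN']
  exact_mod_cast j.2

lemma pi_marginal {r : ℕ} (μ : Fin r → Measure ℝ) [∀ i, IsProbabilityMeasure (μ i)]
    (I : Finset (Fin r)) :
    (Measure.pi μ).map (fun v (i : I) => v i.1) = Measure.pi fun i : I => μ i := by
  classical
  symm
  apply Measure.pi_eq
  intro s hs
  rw [Measure.map_apply (by fun_prop) (MeasurableSet.univ_pi hs)]
  have : (fun (v : Fin r → ℝ) (i : I) => v i.1) ⁻¹' (Set.univ.pi s) =
      Set.univ.pi (fun i => if h : i ∈ I then s ⟨i, h⟩ else Set.univ) := by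
    ext v
    simp only [Set.mem_preimage, Set.mem_univ_pi]
    constructor
    · intro h i
      by_cases hi : i ∈ I
      · simpa [hi] using h ⟨i, hi⟩
      · simp [hi]
    · intro h i
      simpa using h i
  rw [this, Measure.pi_pi]
  rw [← Finset.prod_subset (Finset.subset_univ I)]
  · rw [← Finset.prod_coe_sort]
    apply Finset.prod_congr rfl
    intro i _
    simp
  · intro i _ hi
    simp [hi]

/-- Grid copula. -/
def gridMeas (r k N : ℕ) {Ω : Type} [Fintype Ω] (e : Ω → Fin r → Fin N) :
    Measure (Fin r → ℝ) :=
  ∑ ω, ((N : ℝ≥0∞)⁻¹ ^ k) • Measure.pi fun i => cellMeas N (e ω i)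

lemma cube_sum (N k : ℕ) (hN : 0 < N) {ι : Type*} [Fintype ι] [DecidableEq ι] (hι : Fintype.card ι = k) :
    ∑ y : ι → Fin N, ((N : ℝ≥0∞)⁻¹ ^ k) • (Measure.pi fun i => cellMeas N (y i)) =
      Measure.pi fun _ : ι => volume.restrict (Set.Icc (0 : ℝ) 1) := by
  classical
  have := fun j => cell_prob N j hN
  symm
  apply Measure.pi_eq
  intro s hs
  rw [← cell_sum N hN]
  simp only [Measure.coe_finsetSum, Finset.sum_apply, Measure.smul_apply, Measure.pi_pi,
    smul_eq_mul]
  rw [Finset.prod_univ_sum]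
  simp only [Fintype.piFinset_univ]
  apply Finset.sum_congr rfl
  intro y _
  rw [Finset.prod_mul_distrib, Finset.prod_const, Finset.card_univ, hι]

lemma grid_copula (r k N : ℕ) (hN : 0 < N) (hkr : k ≤ r)
    {Ω : Type} [Fintype Ω] (e : Ω → Fin r → Fin N)
    (he : ∀ I : Finset (Fin r), I.card = k → Function.Bijective (fun ω (i : I) => e ω i)) :
    IsCopulaOfOrder r k (gridMeas r k N e) := by
  classical
  have := fun j => cell_prob N j hN
  have hcard : (Fintype.card Ω : ℝ≥0∞) * (N : ℝ≥0∞)⁻¹ ^ k = 1 := by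
    obtain ⟨I, -, hI⟩ := Finset.exists_subset_card_eq (s := (Finset.univ : Finset (Fin r)))
      (n := k) (by simpa using hkr)
    have h1 := Fintype.card_of_bijective (he I hI)
    rw [h1]
    simp only [Fintype.card_fun, Fintype.card_fin, Fintype.card_coe, hI]
    push_cast
    rw [← mul_pow, ENNReal.mul_inv_cancel (by simpa using hN.ne') (by simp), one_pow]
  refine ⟨⟨?_⟩, ?_, ?_⟩
  · simp only [gridMeas, Measure.coe_finsetSum, Finset.sum_apply, Measure.smul_apply,
      measure_univ, smul_eq_mul, mul_one, Finset.sum_const, Finset.card_univ, nsmul_eq_mul]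
    exact hcard
  · simp only [gridMeas, cube, Measure.coe_finsetSum, Finset.sum_apply, Measure.smul_apply,
      Measure.pi_pi, cell_Icc_one N hN, Finset.prod_const_one,
      smul_eq_mul, mul_one, Finset.sum_const, Finset.card_univ, nsmul_eq_mul]
    exact hcard
  · intro I hI
    rw [← cube_sum N k hN (ι := I) (by simpa using hI)]
    rw [← Function.Bijective.sum_comp (he I hI)
      (fun y : I → Fin N => ((N : ℝ≥0∞)⁻¹ ^ k) • (Measure.pi fun i => cellMeas N (y i)))]
    rw [gridMeas, Measure.map_finset_sum (Measurable.aemeasurable (by fun_prop))]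
    apply Finset.sum_congr rfl
    intro ω _
    rw [Measure.map_smul, pi_marginal]

lemma pi_tail_zero {r N : ℕ} (hN : 0 < N) (d : Fin r → Fin N) (Z : Finset (Fin r)) (s : ℝ)
    (h : ∃ i ∈ Z, s ≤ ((d i).val : ℝ) / N) :
    (Measure.pi fun i => cellMeas N (d i)) {v | ∀ i ∈ Z, v i ≤ s} = 0 := by
  have := fun j => cell_prob N j hN
  obtain ⟨i, hi, hs⟩ := h
  have h0 := Measure.pi_eval_preimage_null (fun i => cellMeas N (d i)) (cell_Iic_zero N (d i) s hs)
  exact measure_mono_null (fun v hv => hv i hi) h0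

lemma pi_tail_one {r N : ℕ} (hN : 0 < N) (d : Fin r → Fin N) (Z : Finset (Fin r)) (s : ℝ)
    (h : ∀ i ∈ Z, (((d i).val : ℝ) + 1) / N ≤ s) :
    (Measure.pi fun i => cellMeas N (d i)) {v | ∀ i ∈ Z, v i ≤ s} = 1 := by
  have := fun j => cell_prob N j hN
  have h1 : {v : Fin r → ℝ | ∀ i ∈ Z, v i ≤ s} = (Z : Set (Fin r)).pi fun _ => Set.Iic s := by
    ext v; simp [Set.mem_pi]
  rw [h1, Measure.pi_pi_finset]
  apply Finset.prod_eq_one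
  intro i hi
  exact cell_Iic_one N _ hN s (h i hi)

lemma exists_block (r k p n : ℕ) (hp : p.Prime) (hrp : r ≤ p) (hkr : k ≤ r)
    (J : Finset (Fin r)) :
    ∃ m : Measure (Fin r → ℝ), IsCopulaOfOrder r k m ∧
      ∀ Z : Finset (Fin r), k < Z.card → ∀ s : ℝ, 0 < s → s ≤ 1 / (2 * p) →
        (¬ Z ⊆ J → m {v | ∀ i ∈ Z, v i ≤ s} = 0) ∧
        m {v | ∀ i ∈ Z, v i ≤ s} ≤ ((p ^ (n + 2) : ℕ) : ℝ≥0∞)⁻¹ ^ k ∧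
        (s ≤ 1 / ((p ^ (n + 2) : ℕ) : ℝ) → m {v | ∀ i ∈ Z, v i ≤ s} = 0) ∧
        (Z ⊆ J → 2 / ((p ^ (n + 2) : ℕ) : ℝ) ≤ s →
          m {v | ∀ i ∈ Z, v i ≤ s} = ((p ^ (n + 2) : ℕ) : ℝ≥0∞)⁻¹ ^ k) := by
  classical
  have hA := exists_array r k p n hp hrp J
  have hp2 := hp.two_le
  have hNe : p ^ (n + 2) = p * p ^ (n + 1) := by ring
  rw [hNe]
  have hpQ : p ≤ p ^ (n + 1) := Nat.le_self_pow (by omega) p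
  generalize p ^ (n + 1) = Q at hA hpQ ⊢
  obtain ⟨Ω, hΩ, e, ω₀, he, h1, h2, h3⟩ := hA
  have hN : 0 < p * Q := Nat.mul_pos hp.pos (by omega)
  have hpr : (2 : ℝ) ≤ p := by exact_mod_cast hp2
  have hQr : (2 : ℝ) ≤ Q := by exact_mod_cast hp2.trans hpQ
  have := fun j => cell_prob (p * Q) j hN
  refine ⟨gridMeas r k (p * Q) e, grid_copula r k _ hN hkr e he, ?_⟩
  intro Z hZ s hs hsp
  have hval : gridMeas r k (p * Q) e {v | ∀ i ∈ Z, v i ≤ s} =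
      (((p * Q : ℕ) : ℝ≥0∞)⁻¹ ^ k) *
        (Measure.pi fun i => cellMeas (p * Q) (e ω₀ i)) {v | ∀ i ∈ Z, v i ≤ s} := by
    simp only [gridMeas, Measure.coe_finsetSum, Finset.sum_apply, Measure.smul_apply, smul_eq_mul]
    rw [Finset.sum_eq_single ω₀]
    · intro ω _ hω
      obtain ⟨i, hi, hi'⟩ := h3 ω hω Z hZ
      rw [pi_tail_zero hN, mul_zero]
      refine ⟨i, hi, hsp.trans ?_⟩
      have : (Q : ℝ) ≤ (e ω i).val := by exact_mod_cast hi'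
      push_cast
      rw [div_le_div_iff₀ (by positivity) (by positivity)]
      nlinarith [mul_pos (show (0 : ℝ) < p by linarith) (show (0 : ℝ) < Q by linarith)]
    · simp
  rw [hval]
  have hQ1 : ∀ i, i ∉ J → s ≤ ((e ω₀ i).val : ℝ) / (p * Q : ℕ) := by
    intro i hi
    rw [h2 i hi, Nat.cast_sub (by omega)]
    refine hsp.trans ?_
    push_cast
    rw [div_le_div_iff₀ (by positivity) (by positivity)]
    nlinarith
  refine ⟨?_, ?_, ?_, ?_⟩
  · intro hZJ
    obtain ⟨i, hi, hiJ⟩ := Finset.not_subset.1 hZJ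
    rw [pi_tail_zero hN _ _ _ ⟨i, hi, hQ1 i hiJ⟩, mul_zero]
  · exact mul_le_of_le_one_right' prob_le_one
  · intro hs1
    have hne : Z.Nonempty := Finset.card_pos.1 (by omega)
    obtain ⟨i, hi⟩ := hne
    rw [pi_tail_zero hN, mul_zero]
    refine ⟨i, hi, ?_⟩
    by_cases hiJ : i ∈ J
    · rw [h1 i hiJ]; simpa using hs1
    · exact hQ1 i hiJ
  · intro hZJ hs2
    rw [pi_tail_one hN, mul_one]
    intro i hi
    rw [h1 i (hZJ hi)]
    norm_num at hs2 ⊢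
    exact hs2

/-! ### Part 3: tails -/

lemma tail_of_liminf (r : ℕ) (c : Measure (Fin r → ℝ)) (J : Finset (Fin r)) (α β : ℝ)
    (hα : 0 < α) (hβ : 0 ≤ β) (h : tailLiminf r c J β = ENNReal.ofReal α) :
    tailDeg r c J = ENNReal.ofReal β ∧ tailCoef r c J = ENNReal.ofReal α := by
  have hdeg : tailDeg r c J = ENNReal.ofReal β := by
    apply le_antisymm
    · apply ENNReal.le_of_forall_pos_le_add
      intro ε hε _
      apply sInf_le
      have h0 : (ENNReal.ofReal β + (ε : ℝ≥0∞)).toReal = β + ε := by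
        rw [ENNReal.toReal_add (by simp) (by simp), ENNReal.toReal_ofReal hβ]; simp
      simp only [Set.mem_ofPred_eq]
      rw [h0]
      have hε' : (0 : ℝ) < ε := hε
      have hv : Tendsto (fun s : ℝ => (ENNReal.ofReal (s ^ (ε : ℝ)))⁻¹)
          (nhdsWithin 0 (Set.Ioi 0)) (nhds ⊤) := by
        rw [← ENNReal.inv_zero, tendsto_inv_iff]
        have h1 : Tendsto (fun s : ℝ => s ^ (ε : ℝ)) (nhdsWithin 0 (Set.Ioi 0)) (nhds 0) := by
          have := (Real.continuousAt_rpow_const 0 (ε : ℝ) (Or.inr hε'.le)).tendsto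
          rw [Real.zero_rpow hε'.ne'] at this
          exact this.mono_left nhdsWithin_le_nhds
        simpa using ENNReal.tendsto_ofReal h1
      have hmul := ENNReal.le_liminf_mul (f := nhdsWithin (0 : ℝ) (Set.Ioi 0))
        (u := fun s : ℝ => c ({v | ∀ i ∈ J, v i ≤ s} ∩ cube r) / ENNReal.ofReal (s ^ β))
        (v := fun s : ℝ => (ENNReal.ofReal (s ^ (ε : ℝ)))⁻¹)
      rw [hv.liminf_eq] at hmul
      have h2 : tailLiminf r c J β * ⊤ = ⊤ := by
        rw [h]; exact ENNReal.mul_top (by simpa using hα)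
      unfold tailLiminf at h2 ⊢
      rw [h2] at hmul
      rw [eq_top_iff]
      refine hmul.trans (le_of_eq ?_)
      apply liminf_congr
      filter_upwards [self_mem_nhdsWithin] with s hs
      have hs : 0 < s := hs
      simp only [Pi.mul_apply, div_eq_mul_inv]
      rw [Real.rpow_add hs, ENNReal.ofReal_mul (by positivity), ENNReal.mul_inv, mul_assoc]
      · right; simp
      · left; simp
    · apply le_sInf
      intro τ hτ
      by_contra! hlt
      have hτt : τ.toReal ≤ β := by
        have := (ENNReal.toReal_lt_toReal hlt.ne_top ENNReal.ofReal_ne_top).2 hlt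
        rw [ENNReal.toReal_ofReal hβ] at this
        exact this.le
      have hle : tailLiminf r c J τ.toReal ≤ tailLiminf r c J β := by
        refine liminf_le_liminf ?_
        filter_upwards [Ioo_mem_nhdsGT (zero_lt_one' ℝ)] with s hs
        exact ENNReal.div_le_div_left (ENNReal.ofReal_le_ofReal
          (Real.rpow_le_rpow_of_exponent_ge hs.1 hs.2.le hτt)) _
      rw [h, (show tailLiminf r c J τ.toReal = ⊤ from hτ)] at hle
      simp at hle
  refine ⟨hdeg, ?_⟩
  rw [tailCoef, hdeg, ENNReal.toReal_ofReal hβ, h]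

lemma copula_inter_cube {r k : ℕ} {c : Measure (Fin r → ℝ)} (hc : IsCopulaOfOrder r k c)
    (A : Set (Fin r → ℝ)) : c (A ∩ cube r) = c A := by
  have := hc.1
  apply measure_inter_conull
  have hm : MeasurableSet (cube r) := MeasurableSet.univ_pi fun _ => measurableSet_Icc
  exact (prob_compl_eq_zero_iff hm).2 hc.2.1

lemma copula_low {r k : ℕ} (hkr : k ≤ r) {c : Measure (Fin r → ℝ)} (hc : IsCopulaOfOrder r k c)
    (Z : Finset (Fin r)) (hZ : Z.card ≤ k) (s : ℝ) (hs : 0 < s) (hs1 : s ≤ 1) :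
    c {v | ∀ i ∈ Z, v i ≤ s} = ENNReal.ofReal (s ^ (Z.card : ℝ)) := by
  classical
  obtain ⟨I, hZI, -, hI⟩ := Finset.exists_subsuperset_card_eq (Finset.subset_univ Z) hZ
    (by simpa using hkr)
  have hA : {v : Fin r → ℝ | ∀ i ∈ Z, v i ≤ s} = (fun v (i : I) => v i.1) ⁻¹'
      (Set.univ.pi fun i : I => if i.1 ∈ Z then Set.Iic s else Set.univ) := by
    ext v
    simp only [Set.mem_ofPred_eq, Set.mem_preimage, Set.mem_univ_pi]
    constructor
    · intro h i
      by_cases hi : i.1 ∈ Z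
      · simpa [hi] using h i hi
      · simp [hi]
    · intro h i hi
      simpa [hi] using h ⟨i, hZI hi⟩
  have hms : MeasurableSet
      (Set.univ.pi fun i : I => if i.1 ∈ Z then Set.Iic s else Set.univ) := by
    apply MeasurableSet.univ_pi
    intro i
    split_ifs
    · exact measurableSet_Iic
    · exact MeasurableSet.univ
  rw [hA, ← Measure.map_apply (by fun_prop) hms, hc.2.2 I hI, Measure.pi_pi]
  have h1 : ∀ i : I, (volume.restrict (Set.Icc (0 : ℝ) 1))
      (if i.1 ∈ Z then Set.Iic s else Set.univ) = if i.1 ∈ Z then ENNReal.ofReal s else 1 := by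
    intro i
    split_ifs
    · rw [Measure.restrict_apply measurableSet_Iic]
      have : Set.Iic s ∩ Set.Icc 0 1 = Set.Icc 0 s := by
        ext x; simp only [Set.mem_inter_iff, Set.mem_Iic, Set.mem_Icc]
        constructor
        · rintro ⟨a, b, c⟩; exact ⟨b, a⟩
        · rintro ⟨a, b⟩; exact ⟨b, a, b.trans hs1⟩
      rw [this, Real.volume_Icc, sub_zero]
    · simp
  simp_rw [h1]
  rw [Finset.prod_coe_sort I (fun i => if i ∈ Z then ENNReal.ofReal s else 1),
    Finset.prod_ite_mem, Finset.inter_eq_right.2 hZI, Finset.prod_const, Real.rpow_natCast,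
    ENNReal.ofReal_pow hs.le]

lemma mix_copula {r k : ℕ} {ι : Type*} [Countable ι] (q₀ : ℝ≥0∞) (m₀ : Measure (Fin r → ℝ))
    (q : ι → ℝ≥0∞) (m : ι → Measure (Fin r → ℝ)) (h₀ : IsCopulaOfOrder r k m₀)
    (h : ∀ i, IsCopulaOfOrder r k (m i)) (hq : q₀ + ∑' i, q i = 1) :
    IsCopulaOfOrder r k (q₀ • m₀ + Measure.sum fun i => q i • m i) := by
  have hm : MeasurableSet (cube r) := MeasurableSet.univ_pi fun _ => measurableSet_Icc
  have key : ∀ A, MeasurableSet A → ∀ t, m₀ A = t → (∀ i, m i A = t) →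
      (q₀ • m₀ + Measure.sum fun i => q i • m i) A = t := by
    intro A hA t h1 h2
    rw [Measure.add_apply, Measure.sum_apply _ hA]
    simp only [Measure.smul_apply, smul_eq_mul, h1, h2]
    rw [ENNReal.tsum_mul_right, ← add_mul, hq, one_mul]
  refine ⟨⟨key _ MeasurableSet.univ _ h₀.1.measure_univ fun i => (h i).1.measure_univ⟩,
    key _ hm _ h₀.2.1 fun i => (h i).2.1, ?_⟩
  intro J hJ
  have hmeas : Measurable (fun (v : Fin r → ℝ) (i : J) => v i.1) := by fun_prop
  ext A hA
  rw [Measure.map_apply hmeas hA]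
  apply key _ (hmeas hA)
  · rw [← Measure.map_apply hmeas hA, h₀.2.2 J hJ]
  · intro i; rw [← Measure.map_apply hmeas hA, (h i).2.2 J hJ]

/-! ### Part 4: the series -/

lemma weight_mul (N : ℕ) (hN : 0 < N) (k : ℕ) (b : ℝ) :
    ENNReal.ofReal ((N : ℝ) ^ ((k : ℝ) - b)) * ((N : ℝ≥0∞)⁻¹ ^ k) =
      ENNReal.ofReal ((N : ℝ) ^ (-b)) := by
  have hN' : (0 : ℝ) < N := by exact_mod_cast hN
  have h1 : ((N : ℝ≥0∞)⁻¹ ^ k) = ENNReal.ofReal ((N : ℝ) ^ (-(k : ℝ))) := by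
    rw [Real.rpow_neg hN'.le, Real.rpow_natCast, ENNReal.ofReal_inv_of_pos (by positivity),
      ENNReal.ofReal_pow hN'.le, ENNReal.ofReal_natCast, ENNReal.inv_pow]
  rw [h1, ← ENNReal.ofReal_mul (by positivity), ← Real.rpow_add hN']
  congr 2; ring

lemma geo_shift (p : ℕ) (hp : 2 ≤ p) (t : ℝ) (m n : ℕ) :
    ENNReal.ofReal (((p ^ (m + n) : ℕ) : ℝ) ^ t) =
      ENNReal.ofReal (((p ^ n : ℕ) : ℝ) ^ t) * ENNReal.ofReal ((p : ℝ) ^ t) ^ m := by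
  have hp' : (0 : ℝ) < p := by exact_mod_cast (by omega : 0 < p)
  rw [← ENNReal.ofReal_pow (by positivity), ← ENNReal.ofReal_mul (by positivity)]
  congr 1
  push_cast
  rw [pow_add, Real.mul_rpow (by positivity) (by positivity), mul_comm, ← Real.rpow_natCast,
    ← Real.rpow_natCast, ← Real.rpow_mul hp'.le, ← Real.rpow_mul hp'.le, ← Real.rpow_natCast,
    ← Real.rpow_mul hp'.le, mul_comm t (m : ℝ)]

lemma ratio_lt_one (p : ℕ) (hp : 2 ≤ p) (t : ℝ) (ht : t < 0) :
    ENNReal.ofReal ((p : ℝ) ^ t) < 1 := by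
  rw [ENNReal.ofReal_lt_one]
  exact Real.rpow_lt_one_of_one_lt_of_neg (by exact_mod_cast (by omega : 1 < p)) ht

lemma weights_summable (p : ℕ) (hp : 2 ≤ p) (t : ℝ) (ht : t < 0) :
    ∑' n : ℕ, ENNReal.ofReal (((p ^ (n + 2) : ℕ) : ℝ) ^ t) ≠ ⊤ := by
  rw [tsum_congr fun n => geo_shift p hp t n 2, ENNReal.tsum_mul_left, ENNReal.tsum_geometric]
  apply ENNReal.mul_ne_top ENNReal.ofReal_ne_top
  rw [ENNReal.inv_ne_top]
  exact (tsub_pos_of_lt (ratio_lt_one p hp t ht)).ne'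

lemma series_upper (p : ℕ) (hp : 2 ≤ p) (b : ℝ) (hb : 0 < b) (n₀ : ℕ) (s : ℝ) (hs : 0 < s)
    (g : ℕ → ℝ≥0∞) (hg : ∀ n, g n ≤ ENNReal.ofReal (((p ^ (n + n₀ + 2) : ℕ) : ℝ) ^ (-b)))
    (hg0 : ∀ n, s ≤ 1 / ((p ^ (n + n₀ + 2) : ℕ) : ℝ) → g n = 0) :
    ∑' n, g n ≤ (1 - ENNReal.ofReal ((p : ℝ) ^ (-b)))⁻¹ * ENNReal.ofReal (s ^ b) := by
  classical
  have hp' : (0 : ℝ) < p := by exact_mod_cast (by omega : 0 < p)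
  have hp1 : (1 : ℝ) < p := by exact_mod_cast (by omega : 1 < p)
  have hex : ∃ n, 1 / ((p ^ (n + n₀ + 2) : ℕ) : ℝ) < s := by
    obtain ⟨n, hn⟩ := pow_unbounded_of_one_lt (1 / s) hp1
    refine ⟨n, ?_⟩
    push_cast
    rw [div_lt_comm₀ (by positivity) hs]
    exact hn.trans_le (pow_le_pow_right₀ hp1.le (by omega))
  have h1 := Nat.find_spec hex
  have h2 : ∀ n < Nat.find hex, g n = 0 := fun n hn => hg0 n (not_lt.1 (Nat.find_min hex hn))
  generalize Nat.find hex = n₁ at h1 h2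
  have hsplit : ∑' n, g n = ∑' m, g (m + n₁) := by
    have h3 := Summable.sum_add_tsum_nat_add' (f := g) (k := n₁) ENNReal.summable
    rw [Finset.sum_eq_zero (fun n hn => h2 n (Finset.mem_range.1 hn)), zero_add] at h3
    exact h3.symm
  rw [hsplit]
  have hterm : ∀ m, g (m + n₁) ≤ ENNReal.ofReal (s ^ b) *
        ENNReal.ofReal ((p : ℝ) ^ (-b)) ^ m := by
    intro m
    have h4 := hg (m + n₁)
    rw [show m + n₁ + n₀ + 2 = m + (n₁ + n₀ + 2) by ring, geo_shift p hp] at h4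
    refine h4.trans ?_
    refine mul_le_mul_left (ENNReal.ofReal_le_ofReal ?_) _
    rw [Real.rpow_neg (by positivity), ← Real.inv_rpow (by positivity)]
    apply Real.rpow_le_rpow (by positivity) _ hb.le
    rw [← one_div]; exact h1.le
  refine (ENNReal.tsum_le_tsum hterm).trans (le_of_eq ?_)
  rw [ENNReal.tsum_mul_left, ENNReal.tsum_geometric, mul_comm]

lemma series_lower (p : ℕ) (hp : 2 ≤ p) (b : ℝ) (hb : 0 < b) (n₀ : ℕ) (s : ℝ) (hs : 0 < s)
    (hs1 : s ≤ 2 / ((p ^ (n₀ + 2) : ℕ) : ℝ))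
    (g : ℕ → ℝ≥0∞)
    (hg : ∀ n, 2 / ((p ^ (n + n₀ + 2) : ℕ) : ℝ) ≤ s →
      g n = ENNReal.ofReal (((p ^ (n + n₀ + 2) : ℕ) : ℝ) ^ (-b))) :
    ENNReal.ofReal ((2 * p : ℝ) ^ (-b)) * ENNReal.ofReal (s ^ b) ≤ ∑' n, g n := by
  classical
  have hp' : (0 : ℝ) < p := by exact_mod_cast (by omega : 0 < p)
  have hp1 : (1 : ℝ) < p := by exact_mod_cast (by omega : 1 < p)
  have hex : ∃ n, 2 / ((p ^ (n + n₀ + 2) : ℕ) : ℝ) ≤ s := by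
    obtain ⟨n, hn⟩ := pow_unbounded_of_one_lt (2 / s) hp1
    refine ⟨n, ?_⟩
    push_cast
    rw [div_le_comm₀ (by positivity) hs]
    exact hn.le.trans (pow_le_pow_right₀ hp1.le (by omega))
  have h1 := Nat.find_spec hex
  have h2 : ∀ n < Nat.find hex, s < 2 / ((p ^ (n + n₀ + 2) : ℕ) : ℝ) :=
    fun n hn => not_le.1 (Nat.find_min hex hn)
  generalize Nat.find hex = n₁ at h1 h2
  refine le_trans ?_ (ENNReal.le_tsum n₁)
  rw [hg n₁ h1, ← ENNReal.ofReal_mul (by positivity)]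
  apply ENNReal.ofReal_le_ofReal
  have h3 : s / (2 * p) ≤ 1 / ((p ^ (n₁ + n₀ + 2) : ℕ) : ℝ) := by
    have h4 : s ≤ 2 * p / ((p ^ (n₁ + n₀ + 2) : ℕ) : ℝ) := by
      rcases n₁ with _ | n
      · rw [zero_add]
        refine hs1.trans ?_
        gcongr
        linarith
      · refine (h2 n (by omega)).le.trans (le_of_eq ?_)
        push_cast
        rw [show n + 1 + n₀ + 2 = (n + n₀ + 2) + 1 by ring, pow_succ]
        field_simp
        ring
    rw [div_le_iff₀ (by positivity)]
    refine h4.trans (le_of_eq ?_)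
    ring
  rw [Real.rpow_neg (by positivity), Real.rpow_neg (by positivity), ← Real.inv_rpow (by positivity),
    ← Real.inv_rpow (by positivity), ← Real.mul_rpow (by positivity) hs.le]
  apply Real.rpow_le_rpow (by positivity) _ hb.le
  rw [← one_div ((p ^ (n₁ + n₀ + 2) : ℕ) : ℝ)]
  refine le_trans (le_of_eq ?_) h3
  rw [div_eq_inv_mul]

lemma exists_family (r k : ℕ) (hkr : k ≤ r) (J : Finset (Fin r)) (a b : ℝ)
    (hJ : k < J.card → (k : ℝ) < b) (ε : ℝ≥0∞) (hε : ε ≠ 0) :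
    ∃ (q : ℕ → ℝ≥0∞) (μ : ℕ → Measure (Fin r → ℝ)),
      (∀ n, IsCopulaOfOrder r k (μ n)) ∧ ∑' n, q n ≤ ε ∧
      (∀ Z : Finset (Fin r), k < Z.card → ¬ Z ⊆ J →
        ∀ᶠ s : ℝ in nhdsWithin (0 : ℝ) (Set.Ioi 0),
          ∑' n, q n * μ n {v | ∀ i ∈ Z, v i ≤ s} = 0) ∧
      (∀ Z : Finset (Fin r), k < Z.card → Z ⊆ J →
        ∃ C : ℝ≥0∞, C ≠ ⊤ ∧ ∀ᶠ s : ℝ in nhdsWithin (0 : ℝ) (Set.Ioi 0),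
          ∑' n, q n * μ n {v | ∀ i ∈ Z, v i ≤ s} ≤ C * ENNReal.ofReal (s ^ b)) ∧
      (k < J.card → liminf (fun s : ℝ => (∑' n, q n * μ n {v | ∀ i ∈ J, v i ≤ s}) /
        ENNReal.ofReal (s ^ b)) (nhdsWithin (0 : ℝ) (Set.Ioi 0)) = ENNReal.ofReal a) := by
  obtain ⟨p, hrp, hp⟩ := Nat.exists_infinite_primes r
  have hp2 := hp.two_le
  have hp' : (0 : ℝ) < p := by exact_mod_cast (by omega : 0 < p)
  choose m hm hmt using fun n => exists_block r k p n hp hrp hkr J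
  by_cases hkJ : k < J.card
  swap
  · exact ⟨0, m, hm, by simp, by simp, fun Z _ _ => ⟨0, by simp⟩, fun h => (hkJ h).elim⟩
  have hkb := hJ hkJ
  have hb : 0 < b := lt_of_le_of_lt (Nat.cast_nonneg k) hkb
  set w : ℕ → ℝ≥0∞ := fun n => ENNReal.ofReal (((p ^ (n + 2) : ℕ) : ℝ) ^ ((k : ℝ) - b)) with hw
  have hws := weights_summable p hp2 ((k : ℝ) - b) (by linarith)
  set κ : ℝ≥0∞ := ENNReal.ofReal ((2 * p : ℝ) ^ (-b)) with hκ
  have hκ0 : κ ≠ 0 := by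
    rw [hκ, ENNReal.ofReal_ne_zero_iff]; positivity
  -- choice of the starting scale
  have htend : Tendsto (fun n₀ => ENNReal.ofReal a / κ * ∑' n, w (n + n₀)) atTop (nhds 0) := by
    have h1 := ENNReal.tendsto_sum_nat_add w hws
    have h2 := ENNReal.Tendsto.const_mul (a := ENNReal.ofReal a / κ) h1
      (Or.inr (ENNReal.div_ne_top ENNReal.ofReal_ne_top hκ0))
    simpa using h2
  obtain ⟨n₀, hn₀⟩ := (htend.eventually (gt_mem_nhds (pos_iff_ne_zero.2 hε))).exists
  set T : Finset (Fin r) → ℝ → ℝ≥0∞ := fun Z s =>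
    ∑' n, w (n + n₀) * m (n + n₀) {v | ∀ i ∈ Z, v i ≤ s} with hT
  have hpow : ∀ n, 0 < p ^ n := fun n => Nat.pow_pos hp.pos
  have hsmall : ∀ᶠ s : ℝ in nhdsWithin (0 : ℝ) (Set.Ioi 0), 0 < s ∧ s ≤ 1 / (2 * p) ∧
      s ≤ 2 / ((p ^ (n₀ + 2) : ℕ) : ℝ) := by
    have hpos2 : (0 : ℝ) < 2 / ((p ^ (n₀ + 2) : ℕ) : ℝ) := by
      have := hpow (n₀ + 2)
      positivity
    filter_upwards [Ioc_mem_nhdsGT (show (0 : ℝ) < 1 / (2 * p) by positivity),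
      Ioc_mem_nhdsGT hpos2] with s h1 h2
    exact ⟨h1.1, h1.2, h2.2⟩
  have hzero : ∀ Z : Finset (Fin r), k < Z.card → ¬ Z ⊆ J →
      ∀ᶠ s : ℝ in nhdsWithin (0 : ℝ) (Set.Ioi 0), T Z s = 0 := by
    intro Z hZ hZJ
    filter_upwards [hsmall] with s hs
    simp only [hT, ENNReal.tsum_eq_zero]
    intro n
    rw [(hmt (n + n₀) Z hZ s hs.1 hs.2.1).1 hZJ, mul_zero]
  set C := (1 - ENNReal.ofReal ((p : ℝ) ^ (-b)))⁻¹ with hC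
  have hCtop : C ≠ ⊤ := by
    rw [hC, ENNReal.inv_ne_top]
    exact (tsub_pos_of_lt (ratio_lt_one p hp2 _ (by linarith))).ne'
  have hup : ∀ Z : Finset (Fin r), k < Z.card →
      ∀ᶠ s : ℝ in nhdsWithin (0 : ℝ) (Set.Ioi 0), T Z s ≤ C * ENNReal.ofReal (s ^ b) := by
    intro Z hZ
    filter_upwards [hsmall] with s hs
    apply series_upper p hp2 b hb n₀ s hs.1
    · intro n
      rw [← weight_mul _ (hpow _) k b]
      exact mul_le_mul_right (hmt (n + n₀) Z hZ s hs.1 hs.2.1).2.1 _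
    · intro n hn
      rw [(hmt (n + n₀) Z hZ s hs.1 hs.2.1).2.2.1 hn, mul_zero]
  have hlow : ∀ᶠ s : ℝ in nhdsWithin (0 : ℝ) (Set.Ioi 0), κ * ENNReal.ofReal (s ^ b) ≤ T J s := by
    filter_upwards [hsmall] with s hs
    apply series_lower p hp2 b hb n₀ s hs.1 hs.2.2
    intro n hn
    rw [← weight_mul _ (hpow _) k b,
      (hmt (n + n₀) J hkJ s hs.1 hs.2.1).2.2.2 (Finset.Subset.refl _) hn]
  set L := liminf (fun s : ℝ => T J s / ENNReal.ofReal (s ^ b))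
    (nhdsWithin (0 : ℝ) (Set.Ioi 0)) with hL
  have hκL : κ ≤ L := by
    apply le_liminf_of_le (by isBoundedDefault)
    filter_upwards [hlow, self_mem_nhdsWithin] with s hs hs0
    have hs0 : 0 < s := hs0
    rw [ENNReal.le_div_iff_mul_le (Or.inl (by
      rw [ENNReal.ofReal_ne_zero_iff]; positivity)) (Or.inl ENNReal.ofReal_ne_top)]
    exact hs
  have hLC : L ≤ C := by
    have : L ≤ liminf (fun _ : ℝ => C) (nhdsWithin (0 : ℝ) (Set.Ioi 0)) := by
      refine liminf_le_liminf ?_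
      filter_upwards [hup J hkJ] with s hs
      exact ENNReal.div_le_of_le_mul hs
    simpa using this
  have hL0 : L ≠ 0 := fun h => hκ0 (by simpa [h] using hκL)
  have hLt : L ≠ ⊤ := ne_top_of_le_ne_top hCtop hLC
  set A := ENNReal.ofReal a / L with hA
  have hAt : A ≠ ⊤ := ENNReal.div_ne_top ENNReal.ofReal_ne_top hL0
  have hsum : ∀ Z s, ∑' n, (A * w (n + n₀)) * m (n + n₀) {v | ∀ i ∈ Z, v i ≤ s} = A * T Z s := by
    intro Z s
    simp only [hT, mul_assoc, ENNReal.tsum_mul_left]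
  refine ⟨fun n => A * w (n + n₀), fun n => m (n + n₀), fun n => hm _, ?_, ?_, ?_, ?_⟩
  · rw [ENNReal.tsum_mul_left]
    refine le_trans ?_ hn₀.le
    gcongr
    exact ENNReal.div_le_div_left hκL _
  · intro Z hZ hZJ
    filter_upwards [hzero Z hZ hZJ] with s hs
    rw [hsum, hs, mul_zero]
  · intro Z hZ _
    refine ⟨A * C, ENNReal.mul_ne_top hAt hCtop, ?_⟩
    filter_upwards [hup Z hZ] with s hs
    rw [hsum, mul_assoc]
    gcongr
  · intro _
    simp_rw [hsum, mul_div_assoc]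
    rw [ENNReal.liminf_const_mul_of_ne_top hAt]
    rw [← hL, hA, ENNReal.div_mul_cancel hL0 hLt]

theorem stmt_1 (r k : ℕ) (hr : 1 ≤ r) (hk : 1 ≤ k) (hkr : k ≤ r)
    (a b : Finset (Fin r) → ℝ)
    -- `a`, `b` take values in `(0,∞)` on nonempty subsets
    (hpos : ∀ J : Finset (Fin r), J.Nonempty → 0 < a J ∧ 0 < b J)
    -- `a(J) = 1` and `b(J) = |J|` whenever `|J| ≤ k`
    (hlow : ∀ J : Finset (Fin r), J.Nonempty → J.card ≤ k → a J = 1 ∧ b J = J.card)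
    -- `b` is increasing: `b(J) < b(J')` whenever `J ⊊ J'`
    (hbinc : ∀ J J' : Finset (Fin r), J.Nonempty → J ⊂ J' → b J < b J') :
    ∃ c : Measure (Fin r → ℝ), IsCopulaOfOrder r k c ∧
      ∀ J : Finset (Fin r), J.Nonempty →
        tailDeg r c J = ENNReal.ofReal (b J) ∧
        tailCoef r c J = ENNReal.ofReal (a J) := by
  classical
  have hkb : ∀ J : Finset (Fin r), k < J.card → (k : ℝ) < b J := by
    intro J hJ
    obtain ⟨I, hI, hIc⟩ := Finset.exists_subset_card_eq hJ.le
    have hIne : I.Nonempty := Finset.card_pos.1 (by omega)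
    have h1 := (hlow I hIne hIc.le).2
    rw [hIc] at h1
    rw [← h1]
    apply hbinc I J hIne
    refine Finset.ssubset_iff_subset_ne.2 ⟨hI, ?_⟩
    rintro rfl
    omega
  set ε : ℝ≥0∞ := (Fintype.card (Finset (Fin r)) : ℝ≥0∞)⁻¹ with hε
  have hε0 : ε ≠ 0 := by rw [hε]; simp
  choose q μ hμ hqs hzero hup hlim using fun J : Finset (Fin r) =>
    exists_family r k hkr J (a J) (b J) (hkb J) ε hε0
  obtain ⟨p, hrp, hp⟩ := Nat.exists_infinite_primes r
  obtain ⟨m₀, hm₀, hm₀t⟩ := exists_block r k p 0 hp hrp hkr ∅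
  have hp' : (0 : ℝ) < p := by exact_mod_cast hp.pos
  have htot : ∑' x : Finset (Fin r) × ℕ, q x.1 x.2 ≤ 1 := by
    rw [ENNReal.tsum_prod (f := fun J n => q J n), tsum_fintype]
    refine (Finset.sum_le_sum fun J _ => hqs J).trans ?_
    rw [Finset.sum_const, Finset.card_univ, nsmul_eq_mul, hε]
    exact ENNReal.mul_inv_le_one _
  set q₀ : ℝ≥0∞ := 1 - ∑' x : Finset (Fin r) × ℕ, q x.1 x.2 with hq₀
  set c : Measure (Fin r → ℝ) :=
    q₀ • m₀ + Measure.sum fun x : Finset (Fin r) × ℕ => q x.1 x.2 • μ x.1 x.2 with hc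
  have hcop : IsCopulaOfOrder r k c :=
    mix_copula q₀ m₀ _ _ hm₀ (fun x => hμ x.1 x.2) (tsub_add_cancel_of_le htot)
  refine ⟨c, hcop, ?_⟩
  intro Z hZne
  obtain ⟨haZ, hbZ⟩ := hpos Z hZne
  apply tail_of_liminf r c Z _ _ haZ hbZ.le
  unfold tailLiminf
  simp only [copula_inter_cube hcop]
  rcases le_or_gt Z.card k with hZ | hZ
  · obtain ⟨h1, h2⟩ := hlow Z hZne hZ
    rw [h1, h2]
    have h3 : ∀ᶠ s : ℝ in nhdsWithin 0 (Set.Ioi 0),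
        c {v | ∀ i ∈ Z, v i ≤ s} / ENNReal.ofReal (s ^ (Z.card : ℝ)) = 1 := by
      filter_upwards [Ioc_mem_nhdsGT (zero_lt_one' ℝ)] with s hs
      rw [copula_low hkr hcop Z hZ s hs.1 hs.2]
      have := hs.1
      exact ENNReal.div_self (by rw [ENNReal.ofReal_ne_zero_iff]; positivity)
        ENNReal.ofReal_ne_top
    rw [liminf_congr h3]
    simp
  · set T : Finset (Fin r) → ℝ → ℝ≥0∞ := fun J s =>
      ∑' n, q J n * μ J n {v | ∀ i ∈ Z, v i ≤ s} with hT
    have hmeas : ∀ s : ℝ, MeasurableSet {v : Fin r → ℝ | ∀ i ∈ Z, v i ≤ s} := by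
      intro s
      have : {v : Fin r → ℝ | ∀ i ∈ Z, v i ≤ s} = (Z : Set (Fin r)).pi fun _ => Set.Iic s := by
        ext v; simp [Set.mem_pi]
      rw [this]
      exact MeasurableSet.pi (Set.to_countable _) fun _ _ => measurableSet_Iic
    have hcv : ∀ s, c {v | ∀ i ∈ Z, v i ≤ s} = T Z s +
        (∑ J ∈ Finset.univ.erase Z, T J s + q₀ * m₀ {v | ∀ i ∈ Z, v i ≤ s}) := by
      intro s
      rw [← add_assoc, Finset.add_sum_erase _ (fun J => T J s) (Finset.mem_univ Z), hc,
        Measure.add_apply, Measure.sum_apply _ (hmeas s), add_comm]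
      congr 1
      simp only [Measure.smul_apply, smul_eq_mul]
      rw [ENNReal.tsum_prod (f := fun J n => q J n * μ J n {v | ∀ i ∈ Z, v i ≤ s}), tsum_fintype]
    simp only [hcv, ENNReal.add_div]
    have hT0 : ∀ J ∈ Finset.univ.erase Z, Tendsto (fun s : ℝ => T J s / ENNReal.ofReal (s ^ b Z))
        (nhdsWithin 0 (Set.Ioi 0)) (nhds 0) := by
      intro J hJ
      have hJZ : J ≠ Z := (Finset.mem_erase.1 hJ).1
      by_cases hsub : Z ⊆ J
      · obtain ⟨C, hC, hCe⟩ := hup J Z hZ hsub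
        have hlt : b Z < b J :=
          hbinc Z J hZne (Finset.ssubset_iff_subset_ne.2 ⟨hsub, hJZ.symm⟩)
        have h1 : Tendsto (fun s : ℝ => s ^ (b J - b Z)) (nhdsWithin 0 (Set.Ioi 0)) (nhds 0) := by
          have := (Real.continuousAt_rpow_const 0 (b J - b Z) (Or.inr (by linarith))).tendsto
          rw [Real.zero_rpow (by linarith)] at this
          exact this.mono_left nhdsWithin_le_nhds
        have h2 : Tendsto (fun s : ℝ => C * ENNReal.ofReal (s ^ (b J - b Z)))
            (nhdsWithin 0 (Set.Ioi 0)) (nhds 0) := by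
          have := ENNReal.Tendsto.const_mul (a := C) (ENNReal.tendsto_ofReal h1) (Or.inr hC)
          simpa using this
        refine tendsto_of_tendsto_of_tendsto_of_le_of_le' tendsto_const_nhds h2
          (Eventually.of_forall fun _ => bot_le) ?_
        filter_upwards [hCe, self_mem_nhdsWithin] with s hs hs0
        have hs0 : 0 < s := hs0
        apply ENNReal.div_le_of_le_mul
        rw [mul_assoc, ← ENNReal.ofReal_mul (by positivity), ← Real.rpow_add hs0,
          sub_add_cancel]
        exact hs
      · apply tendsto_const_nhds.congr'
        filter_upwards [hzero J Z hZ hsub] with s hs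
        simp only [hT]
        rw [hs, ENNReal.zero_div]
    have hm0 : Tendsto (fun s : ℝ => q₀ * m₀ {v | ∀ i ∈ Z, v i ≤ s} / ENNReal.ofReal (s ^ b Z))
        (nhdsWithin 0 (Set.Ioi 0)) (nhds 0) := by
      apply tendsto_const_nhds.congr'
      filter_upwards [Ioc_mem_nhdsGT (show (0 : ℝ) < 1 / (2 * p) by positivity)] with s hs
      rw [(hm₀t Z hZ s hs.1 hs.2).1 (by
        rw [Finset.subset_empty]; exact hZne.ne_empty), mul_zero, ENNReal.zero_div]
    have hrest : Tendsto (fun s : ℝ => (∑ J ∈ Finset.univ.erase Z, T J s) /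
        ENNReal.ofReal (s ^ b Z) + q₀ * m₀ {v | ∀ i ∈ Z, v i ≤ s} / ENNReal.ofReal (s ^ b Z))
        (nhdsWithin 0 (Set.Ioi 0)) (nhds 0) := by
      have h1 := (tendsto_finsetSum _ hT0).add hm0
      simp only [Finset.sum_const_zero, add_zero] at h1
      refine h1.congr fun s => ?_
      simp only [div_eq_mul_inv, Finset.sum_mul]
    exact (ENNReal.liminf_add_of_right_tendsto_zero hrest
      (fun s : ℝ => T Z s / ENNReal.ofReal (s ^ b Z))).trans (hlim Z hZ)
end
end

section
/- Let r ≥ 1 and 1 ≤ k ≤ r. Let b be an increasing map from the nonempty subsets of {1,…,r} to (0,∞) with b(J) = |J| for |J| ≤ k. For each m ≥ 1 let a_m map the nonempty subsets of {1,…,r} to (0,∞) with a_m(J) = 1 for |J| ≤ k, and assume (a_m) converges pointwise to a map a with values in (0,∞). Let (s_m) be a sequence in (0,1) with s_m → 0. Then there exist a strictly increasing map φ : ℕ → ℕ and a copula c of order k on [0,1]^r such that for every n ≥ 1 and every nonempty J ⊆ {1,…,r}: c({u ∈ [0,1]^r : u_i ≤ s_{φ(n)} for all i ∈ J}) = a_{φ(n)}(J)·(s_{φ(n)})^{b(J)}.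 -/
open MeasureTheory Filter
open scoped ENNReal BigOperators

noncomputable section

/-- iterated difference -/
def itDiff : (r : ℕ) → ((Fin r → ℕ) → ℝ) → (Fin r → ℕ) → ℝ
  | 0, S, L => S L
  | r + 1, S, L =>
    itDiff r (fun L' => S (Fin.cons (L 0) L') - S (Fin.cons (L 0 + 1) L')) (Fin.tail L)

lemma itDiff_shift (r : ℕ) : ∀ (S : (Fin r → ℕ) → ℝ) (l L : Fin r → ℕ),
    itDiff r (fun L' => S (l + L')) L = itDiff r S (l + L) := by
  induction r with
  | zero => intro S l L; rfl
  | succ r ih =>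
    intro S l L
    simp only [itDiff]
    have h : ∀ (x : ℕ) (L' : Fin r → ℕ), l + (Fin.cons x L' : Fin (r+1) → ℕ)
        = Fin.cons (l 0 + x) (Fin.tail l + L') := by
      intro x L'
      funext i
      refine Fin.cases ?_ (fun j => ?_) i
      · simp
      · simp [Fin.tail]
    simp only [h]
    have := ih (fun L' => S (Fin.cons (l 0 + L 0) L') - S (Fin.cons (l 0 + L 0 + 1) L'))
      (Fin.tail l) (Fin.tail L)
    simp only [← add_assoc]
    rw [this]
    rfl

lemma itDiff_main (r : ℕ) : ∀ (S : (Fin r → ℕ) → ℝ), (∀ L, 0 ≤ S L) →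
    (∀ L i, ((r : ℝ) + 1) * S (L + Pi.single i 1) ≤ S L) →
    (∀ L, 0 ≤ itDiff r S L) ∧ ∑' L, ENNReal.ofReal (itDiff r S L) = ENNReal.ofReal (S 0) := by
  induction r with
  | zero =>
    intro S h0 h1
    refine ⟨fun L => h0 L, ?_⟩
    simp only [itDiff]
    rw [tsum_eq_single 0]
    intro b hb
    exact absurd (Subsingleton.elim _ _) hb
  | succ r ih =>
    intro S h0 h1
    push_cast at h1
    have hr0 : (0:ℝ) ≤ r := Nat.cast_nonneg r
    have hc0 : ∀ (a : ℕ) (L : Fin r → ℕ),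
        ((r:ℝ) + 1 + 1) * S (Fin.cons (a+1) L) ≤ S (Fin.cons a L) := by
      intro a L
      have := h1 (Fin.cons a L) 0
      convert this using 3
      funext i
      refine Fin.cases ?_ (fun j => ?_) i
      · simp
      · simp
    have hcs : ∀ (a : ℕ) (L : Fin r → ℕ) (i : Fin r),
        ((r:ℝ) + 1 + 1) * S (Fin.cons a (L + Pi.single i 1)) ≤ S (Fin.cons a L) := by
      intro a L i
      have := h1 (Fin.cons a L) i.succ
      convert this using 3
      funext j
      refine Fin.cases ?_ (fun j => ?_) j
      · simp
      · simp [Pi.single_apply]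
    have hS' : ∀ a : ℕ, (∀ L : Fin r → ℕ, 0 ≤ S (Fin.cons a L) - S (Fin.cons (a+1) L)) := by
      intro a L
      have := hc0 a L
      nlinarith [h0 (Fin.cons (a+1) L)]
    have key := fun a : ℕ => ih (fun L => S (Fin.cons a L) - S (Fin.cons (a+1) L)) (hS' a)
      (by
        intro L i
        have e1 := hc0 a L
        have e2 := hcs a L i
        have e3 := h0 (Fin.cons (a+1) (L + Pi.single i 1))
        have e4 := h0 (Fin.cons (a+1) L)
        have e5 := h0 (Fin.cons a L)
        have e6 : ((r:ℝ)+1) * S (Fin.cons a (L + Pi.single i 1)) ≤ 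
          S (Fin.cons a L) - S (Fin.cons (a+1) L) := by
          have hp : (0:ℝ) < r + 1 + 1 := by positivity
          refine le_of_mul_le_mul_left ?_ hp
          nlinarith
        nlinarith)
    refine ⟨fun L => (key (L 0)).1 _, ?_⟩
    rw [← (Fin.consEquiv (fun _ => ℕ)).tsum_eq, ENNReal.tsum_prod']
    have : ∀ (a : ℕ) (L : Fin r → ℕ), itDiff (r+1) S (Fin.consEquiv (fun _ => ℕ) (a, L)) =
      itDiff r (fun L => S (Fin.cons a L) - S (Fin.cons (a+1) L)) L := by
      intro a L
      simp [itDiff, Fin.consEquiv]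
    simp only [this, (key _).2]
    have hz : (0 : Fin (r+1) → ℕ) = Fin.cons 0 0 := by
      funext i
      refine Fin.cases ?_ (fun j => ?_) i <;> simp
    rw [hz]
    set u : ℕ → ℝ := fun a => S (Fin.cons a 0) with hu
    have hu0 : ∀ a, 0 ≤ u a := fun a => h0 _
    have hu1 : ∀ a, u (a+1) ≤ u a * (1/2) := by
      intro a
      have := hc0 a 0
      have h3 := hu0 (a+1)
      simp only [hu] at *
      nlinarith
    have hb : ∀ a, u a ≤ u 0 * (1/2)^a := by
      intro a
      induction a with
      | zero => simp
      | succ a iha => rw [pow_succ]; nlinarith [hu1 a]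
    have hlim : Tendsto u atTop (nhds 0) := by
      refine squeeze_zero hu0 hb ?_
      have := (tendsto_pow_atTop_nhds_zero_of_lt_one (r := (1/2:ℝ)) (by norm_num) (by norm_num)).const_mul (u 0)
      simpa using this
    have hsum : HasSum (fun a => u a - u (a+1)) (u 0) := by
      rw [hasSum_iff_tendsto_nat_of_nonneg (fun a => hS' a 0)]
      simp only [Finset.sum_range_sub']
      simpa using hlim.const_sub (u 0)
    have := ENNReal.ofReal_tsum_of_nonneg (fun a => hS' a 0) hsum.summable
    rw [hsum.tsum_eq] at this
    exact this.symm

/-- probability measure on level vectors with prescribed survival function -/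
lemma exists_levels (r : ℕ) (S : (Fin r → ℕ) → ℝ) (h0 : ∀ L, 0 ≤ S L)
    (h1 : ∀ L i, ((r : ℝ) + 1) * S (L + Pi.single i 1) ≤ S L) :
    ∃ P : Measure (Fin r → ℕ), ∀ l, P {L | l ≤ L} = ENNReal.ofReal (S l) := by
  refine ⟨Measure.sum fun L => ENNReal.ofReal (itDiff r S L) • Measure.dirac L, fun l => ?_⟩
  have hm : MeasurableSet {L : Fin r → ℕ | l ≤ L} := (Set.to_countable _).measurableSet
  rw [Measure.sum_apply _ hm]
  have := (itDiff_main r (fun L' => S (l + L')) (fun L => h0 _)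
    (fun L i => by simpa only [add_assoc] using h1 (l + L) i)).2
  simp only [add_zero, itDiff_shift] at this
  rw [← this]
  have hinj : Function.Injective (fun L : Fin r → ℕ => l + L) := add_right_injective l
  have e := hinj.tsum_eq (f := fun L => (ENNReal.ofReal (itDiff r S L) • Measure.dirac L) {L | l ≤ L}) (by
    intro L hL
    simp only [Function.mem_support] at hL
    have : l ≤ L := by
      by_contra hc
      apply hL
      simp [Measure.dirac_apply' _ hm, hc]
    exact ⟨L - l, add_tsub_cancel_of_le this⟩)
  rw [← e]
  refine tsum_congr fun L => ?_
  simp [Measure.dirac_apply' _ hm]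

/-- one-dimensional level law -/
def levW (t : ℕ → ℝ) : Measure ℕ :=
  Measure.sum fun j => ENNReal.ofReal (t j - t (j+1)) • Measure.dirac j

/-- uniform law -/
def unifU : Measure ℝ := (volume : Measure ℝ).restrict (Set.Ioc 0 1)

instance : IsProbabilityMeasure unifU := ⟨by simp [unifU]⟩

/-- cell map -/
def cellG (t : ℕ → ℝ) (j : ℕ) (x : ℝ) : ℝ := t (j+1) + (t j - t (j+1)) * x

lemma sum_cells (t : ℕ → ℝ) (ht : StrictAnti t) (h0 : ∀ n, 0 < t n) (h1 : t 0 = 1)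
    (hl : Tendsto t atTop (nhds 0)) :
    Measure.sum (fun j => (volume : Measure ℝ).restrict (Set.Ioc (t (j+1)) (t j))) = unifU := by
  have hU : Set.Ioc (0:ℝ) 1 = ⋃ j, Set.Ioc (t (j+1)) (t j) := by
    ext x
    simp only [Set.mem_iUnion, Set.mem_Ioc]
    constructor
    · rintro ⟨hx0, hx1⟩
      have hex : ∃ m, t m < x := (hl.eventually (gt_mem_nhds hx0)).exists
      classical
      have hn0 : Nat.find hex ≠ 0 := by
        intro h
        have := Nat.find_spec hex
        rw [h, h1] at this
        linarith
      obtain ⟨j, hj⟩ := Nat.exists_eq_succ_of_ne_zero hn0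
      refine ⟨j, ?_, ?_⟩
      · have := Nat.find_spec hex
        rwa [hj] at this
      · exact not_lt.1 (Nat.find_min hex (by omega))
    · rintro ⟨j, hj1, hj2⟩
      refine ⟨(h0 _).trans hj1, hj2.trans ?_⟩
      rw [← h1]
      exact ht.antitone (Nat.zero_le j)
  rw [unifU, hU, Measure.restrict_iUnion ?_ (fun _ => measurableSet_Ioc)]
  exact ht.antitone.pairwise_disjoint_on_Ioc_succ

lemma levW_Ici (t : ℕ → ℝ) (ht : StrictAnti t) (h0 : ∀ n, 0 < t n) (h1 : t 0 = 1)
    (hl : Tendsto t atTop (nhds 0)) (n : ℕ) : levW t (Set.Ici n) = ENNReal.ofReal (t n) := by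
  have hn1 : t n ≤ 1 := by rw [← h1]; exact ht.antitone (Nat.zero_le n)
  have e : unifU (Set.Ioc 0 (t n)) = ENNReal.ofReal (t n) := by
    rw [unifU, Measure.restrict_apply measurableSet_Ioc, Set.Ioc_inter_Ioc]
    simp [hn1]
  rw [← e, ← sum_cells t ht h0 h1 hl, levW, Measure.sum_apply _ measurableSet_Ici,
    Measure.sum_apply _ measurableSet_Ioc]
  refine tsum_congr fun j => ?_
  rw [Measure.restrict_apply measurableSet_Ioc, Set.Ioc_inter_Ioc, Real.volume_Ioc,
    sup_eq_right.2 (h0 _).le]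
  by_cases hj : n ≤ j
  · have := ht.antitone hj
    simp [hj, this]
  · have : t n ≤ t (j+1) := ht.antitone (by omega)
    have h2 : t n ≤ t j := ht.antitone (by omega)
    simp [hj, h2, this]

lemma levW_prob (t : ℕ → ℝ) (ht : StrictAnti t) (h0 : ∀ n, 0 < t n) (h1 : t 0 = 1)
    (hl : Tendsto t atTop (nhds 0)) : IsProbabilityMeasure (levW t) := by
  constructor
  have := levW_Ici t ht h0 h1 hl 0
  rw [h1] at this
  rw [← ENNReal.ofReal_one, ← this]
  congr 1
  ext; simp

lemma affine_map (p q : ℝ) (hq : 0 < q) :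
    ENNReal.ofReal q • unifU.map (fun x => p + q * x)
      = (volume : Measure ℝ).restrict (Set.Ioc p (p + q)) := by
  have hme : MeasurableEmbedding (fun x : ℝ => p + q * x) :=
    (measurableEmbedding_addLeft p).comp (measurableEmbedding_mulLeft₀ hq.ne')
  have hpre : (fun x : ℝ => p + q * x) ⁻¹' (Set.Ioc p (p+q)) = Set.Ioc 0 1 := by
    ext x
    simp only [Set.mem_preimage, Set.mem_Ioc]
    constructor
    · rintro ⟨h1, h2⟩
      constructor <;> nlinarith
    · rintro ⟨h1, h2⟩
      constructor <;> nlinarith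
  have hvol : ENNReal.ofReal q • (volume : Measure ℝ).map (fun x : ℝ => p + q * x) = volume := by
    have : (fun x : ℝ => p + q * x) = (fun x => p + x) ∘ (fun x => q * x) := rfl
    rw [this, ← Measure.map_map (measurable_const_add p) (measurable_const_mul q),
      ← Measure.map_smul]
    have := Real.smul_map_volume_mul_left hq.ne'
    rw [abs_of_pos hq] at this
    rw [this, map_add_left_eq_self]
  rw [unifU, ← hpre, ← hme.restrict_map, ← Measure.restrict_smul, hvol]

lemma measurable_cellG (t : ℕ → ℝ) : Measurable (fun p : ℕ × ℝ => cellG t p.1 p.2) := by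
  apply measurable_from_prod_countable_right
  intro j
  unfold cellG
  fun_prop

lemma levW_map (t : ℕ → ℝ) (ht : StrictAnti t) (h0 : ∀ n, 0 < t n) (h1 : t 0 = 1)
    (hl : Tendsto t atTop (nhds 0)) :
    ((levW t).prod unifU).map (fun p : ℕ × ℝ => cellG t p.1 p.2) = unifU := by
  rw [← sum_cells t ht h0 h1 hl, sum_cells t ht h0 h1 hl, levW, Measure.prod_sum_left,
    Measure.map_sum (measurable_cellG t).aemeasurable, ← sum_cells t ht h0 h1 hl]
  congr 1
  funext j
  have hj : t (j+1) < t j := ht (Nat.lt_succ_self j)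
  rw [sum_cells t ht h0 h1 hl, Measure.prod_smul_left, Measure.map_smul, Measure.dirac_prod,
    Measure.map_map (measurable_cellG t) measurable_prodMk_left]
  have := affine_map (t (j+1)) (t j - t (j+1)) (by linarith)
  rw [add_sub_cancel] at this
  exact this

lemma pi_map_sub (r : ℕ) (J : Finset (Fin r)) :
    (Measure.pi (fun _ : Fin r => unifU)).map (fun v (i : J) => v i.1)
      = Measure.pi (fun _ : J => unifU) := by
  rw [← Measure.infinitePi_eq_pi]
  exact Measure.infinitePi_map_restrict (μ := fun _ : Fin r => unifU) (I := J)

lemma levels_marginal (r : ℕ) (t : ℕ → ℝ) (ht : StrictAnti t) (h0 : ∀ n, 0 < t n) (h1 : t 0 = 1)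
    (hl : Tendsto t atTop (nhds 0)) (P : Measure (Fin r → ℕ)) (J : Finset (Fin r))
    (hP : ∀ l : Fin r → ℕ, (∀ i, i ∉ J → l i = 0) →
      P {L | l ≤ L} = ENNReal.ofReal (∏ i ∈ J, t (l i))) :
    P.map (fun v (i : J) => v i.1) = Measure.pi (fun _ : J => levW t) := by
  classical
  have hw := levW_prob t ht h0 h1 hl
  symm
  refine Measure.pi_eq_generateFrom (C := fun _ => Set.range Set.Ici) (fun _ => ?_) (fun _ => ?_)
    (fun _ => ?_) ?_
  · exact (borel_eq_generateFrom_Ici ℕ).symm.trans (BorelSpace.measurable_eq (α := ℕ)).symm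
  · rw [← Set.image_univ]; exact isPiSystem_image_Ici _
  · exact ⟨fun _ => Set.Ici 0, fun _ => ⟨0, rfl⟩, fun _ => measure_lt_top _ _, by ext; simp⟩
  · intro s hs
    choose n hn using hs
    rw [Measure.map_apply (by fun_prop) (Set.to_countable _).measurableSet]
    set l : Fin r → ℕ := fun i => if h : i ∈ J then n ⟨i, h⟩ else 0 with hldef
    have e : (fun (v : Fin r → ℕ) (i : J) => v i.1) ⁻¹' (Set.univ.pi s) = {L | l ≤ L} := by
      ext v
      simp only [Set.mem_preimage, Set.mem_pi, Set.mem_univ, forall_true_left, Set.mem_ofPred_eq,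
        Pi.le_def, ← hn, Set.mem_Ici, hldef]
      constructor
      · intro h i
        by_cases hi : i ∈ J
        · simpa [hi] using h ⟨i, hi⟩
        · simp [hi]
      · intro h i
        simpa using h i.1
    rw [e, hP l (fun i hi => by simp [hldef, hi]), ENNReal.ofReal_prod_of_nonneg
      (fun i _ => (h0 _).le), ← Finset.prod_coe_sort]
    refine Finset.prod_congr rfl fun i _ => ?_
    rw [← hn, levW_Ici t ht h0 h1 hl]
    simp [hldef]

/-- assembling -/
lemma build (r k : ℕ) (t : ℕ → ℝ) (ht : StrictAnti t) (h0 : ∀ n, 0 < t n) (h1 : t 0 = 1)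
    (hl : Tendsto t atTop (nhds 0)) (P : Measure (Fin r → ℕ)) (hP1 : P Set.univ = 1)
    (hP : ∀ J : Finset (Fin r), J.card = k → ∀ l : Fin r → ℕ, (∀ i, i ∉ J → l i = 0) →
      P {L | l ≤ L} = ENNReal.ofReal (∏ i ∈ J, t (l i))) :
    ∃ c : Measure (Fin r → ℝ), IsCopulaOfOrder r k c ∧
      ∀ (n : ℕ) (J : Finset (Fin r)), c ({v | ∀ i ∈ J, v i ≤ t n} ∩ cube r) =
        P {L | (fun i => if i ∈ J then n else 0) ≤ L} := by
  classical
  have hw := levW_prob t ht h0 h1 hl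
  have hPp : IsProbabilityMeasure P := ⟨hP1⟩
  let H : (ι : Type) → (ι → ℕ) × (ι → ℝ) → ι → ℝ := fun ι p i => cellG t (p.1 i) (p.2 i)
  have hH : ∀ ι, Measurable (H ι) := by
    intro ι
    refine measurable_pi_lambda _ fun i => ?_
    exact (measurable_cellG t).comp (by fun_prop : Measurable fun p : (ι → ℕ) × (ι → ℝ) => (p.1 i, p.2 i))
  let Q := P.prod (Measure.pi (fun _ : Fin r => unifU))
  have hbd : ∀ᵐ p ∂Q, ∀ i, p.2 i ∈ Set.Ioc (0:ℝ) 1 := by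
    have : ∀ᵐ x ∂(Measure.pi (fun _ : Fin r => unifU)), ∀ i, x i ∈ Set.Ioc (0:ℝ) 1 := by
      rw [ae_all_iff]
      intro i
      have hu : ∀ᵐ x ∂unifU, x ∈ Set.Ioc (0:ℝ) 1 := ae_restrict_mem measurableSet_Ioc
      exact (measurePreserving_eval (fun _ : Fin r => unifU) i).quasiMeasurePreserving.ae hu
    exact Measure.quasiMeasurePreserving_snd.ae this
  have hcm : MeasurableSet (cube r) := MeasurableSet.univ_pi fun _ => measurableSet_Icc
  have hG0 : ∀ (j : ℕ) (x : ℝ), x ∈ Set.Ioc (0:ℝ) 1 → t (j+1) < cellG t j x ∧ cellG t j x ≤ t j := by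
    intro j x hx
    have hj : t (j+1) < t j := ht (Nat.lt_succ_self j)
    unfold cellG
    constructor <;> nlinarith [hx.1, hx.2]
  have hcube : ∀ p : (Fin r → ℕ) × (Fin r → ℝ), (∀ i, p.2 i ∈ Set.Ioc (0:ℝ) 1) → H _ p ∈ cube r := by
    intro p hp i _
    obtain ⟨g1, g2⟩ := hG0 (p.1 i) _ (hp i)
    refine ⟨((h0 _).trans g1).le, g2.trans ?_⟩
    rw [← h1]
    exact ht.antitone (Nat.zero_le _)
  refine ⟨Q.map (H _), ⟨Measure.isProbabilityMeasure_map (hH _).aemeasurable, ?_, ?_⟩, ?_⟩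
  · rw [Measure.map_apply (hH _) hcm, prob_compl_eq_zero_iff (hH _ hcm) |>.1]
    filter_upwards [hbd] with p hp
    simpa using hcube p hp
  · intro J hJ
    have hm := levels_marginal r t ht h0 h1 hl P J (hP J hJ)
    rw [Measure.map_map (by fun_prop) (hH _)]
    have e1 : (fun (v : Fin r → ℝ) (i : J) => v i.1) ∘ H (Fin r) =
      H J ∘ Prod.map (fun (v : Fin r → ℕ) (i : J) => v i.1) (fun (v : Fin r → ℝ) (i : J) => v i.1) := rfl
    rw [e1, ← Measure.map_map (hH _) (by fun_prop), ← Measure.map_prod_map _ _ (by fun_prop) (by fun_prop),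
      hm, pi_map_sub, ← (measurePreserving_arrowProdEquivProdArrow ℕ ℝ J (fun _ => levW t) (fun _ => unifU)).map_eq,
      Measure.map_map (hH _) (MeasurableEquiv.measurable _)]
    have e2 := levW_map t ht h0 h1 hl
    have hsf : ∀ i : J, SigmaFinite (((levW t).prod unifU).map (fun p : ℕ × ℝ => cellG t p.1 p.2)) := by
      intro i; rw [e2]; infer_instance
    have e3 := Measure.pi_map_pi (μ := fun _ : J => (levW t).prod unifU)
      (f := fun _ (p : ℕ × ℝ) => cellG t p.1 p.2) (fun _ => (measurable_cellG t).aemeasurable)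
    rw [e2] at e3
    have : (volume : Measure ℝ).restrict (Set.Icc (0:ℝ) 1) = unifU := restrict_Ioc_eq_restrict_Icc.symm
    rw [this]
    exact e3
  · intro n J
    have hms : MeasurableSet ({v : Fin r → ℝ | ∀ i ∈ J, v i ≤ t n} ∩ cube r) := by
      refine MeasurableSet.inter ?_ hcm
      have : {v : Fin r → ℝ | ∀ i ∈ J, v i ≤ t n} = ⋂ i ∈ J, {v | v i ≤ t n} := by ext; simp
      rw [this]
      exact Finset.measurableSet_biInter _ fun i _ => measurableSet_le (measurable_pi_apply i) measurable_const
    rw [Measure.map_apply (hH _) hms]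
    have : P {L | (fun i => if i ∈ J then n else 0) ≤ L} =
        Q ({L | (fun i => if i ∈ J then n else 0) ≤ L} ×ˢ Set.univ) := by
      simp [Q, Measure.prod_prod]
    rw [this]
    apply measure_congr
    filter_upwards [hbd] with p hp
    apply propext
    change (H _ p ∈ {v : Fin r → ℝ | ∀ i ∈ J, v i ≤ t n} ∩ cube r) ↔ (p ∈ _ ×ˢ Set.univ)
    have hc := hcube p hp
    simp only [Set.mem_inter_iff, hc, and_true, Set.mem_ofPred_eq, Set.mem_prod, Set.mem_univ, Pi.le_def]
    refine forall_congr' fun i => ?_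
    obtain ⟨g1, g2⟩ := hG0 (p.1 i) _ (hp i)
    by_cases hi : i ∈ J
    · simp only [hi, forall_true_left, if_true]
      constructor
      · intro h
        by_contra hlt
        have : t n ≤ t (p.1 i + 1) := ht.antitone (by omega)
        exact absurd (g1.trans_le h) (not_lt.2 this)
      · intro h
        exact g2.trans (ht.antitone h)
    · simp [hi]
/-- top level -/
def topM {r : ℕ} (L : Fin r → ℕ) : ℕ := Finset.univ.sup L

/-- top coordinates -/
def topK {r : ℕ} (L : Fin r → ℕ) : Finset (Fin r) := Finset.univ.filter fun i => L i = topM L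

/-- survival function -/
def surv {r : ℕ} (t : ℕ → ℝ) (α : ℕ → Finset (Fin r) → ℝ) (L : Fin r → ℕ) : ℝ :=
  α (topM L) (topK L) * ∏ i, if L i = topM L then 1 else t (L i)

lemma le_topM {r : ℕ} (L : Fin r → ℕ) (i : Fin r) : L i ≤ topM L :=
  Finset.le_sup (f := L) (Finset.mem_univ i)

lemma topM_eq {r : ℕ} (L : Fin r → ℕ) (M : ℕ) (i : Fin r) (hi : L i = M) (h : ∀ j, L j ≤ M) :
    topM L = M :=
  le_antisymm (Finset.sup_le fun j _ => h j) (hi ▸ le_topM L i)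

lemma topK_nonempty {r : ℕ} (hr : 1 ≤ r) (L : Fin r → ℕ) : (topK L).Nonempty := by
  have : Nonempty (Fin r) := ⟨⟨0, hr⟩⟩
  obtain ⟨i, _, hi⟩ := Finset.exists_mem_eq_sup Finset.univ Finset.univ_nonempty L
  exact ⟨i, by simp [topK, topM, hi]⟩

lemma surv_step {r : ℕ} (hr : 1 ≤ r) (t : ℕ → ℝ) (α : ℕ → Finset (Fin r) → ℝ)
    (h0 : ∀ n, 0 < t n) (h1 : t 0 = 1) (hα : ∀ n K, K.Nonempty → 0 < α n K)
    (hsing : ∀ n i, α n {i} = t n)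
    (ca : ∀ n K, K.Nonempty → ((r:ℝ) + 1) * t (n+1) ≤ α n K * t n ^ r)
    (cb : ∀ n K i, K.Nonempty → i ∉ K →
      ((r:ℝ) + 1) * α (n+1) (insert i K) ≤ t n * α (n+1) K)
    (cc : ∀ n, ((r:ℝ) + 1) * t (n+1) ≤ t n) (L : Fin r → ℕ) (i : Fin r) :
    ((r:ℝ) + 1) * surv t α (L + Pi.single i 1) ≤ surv t α L := by
  have hr0 : (0:ℝ) ≤ r := Nat.cast_nonneg r
  have hanti : Antitone t := antitone_nat_of_succ_le fun n => by nlinarith [cc n, h0 (n+1)]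
  have ht1 : ∀ n, t n ≤ 1 := fun n => h1 ▸ hanti (Nat.zero_le n)
  have hi' : (L + Pi.single i 1 : Fin r → ℕ) i = L i + 1 := by simp
  have hj' : ∀ j, j ≠ i → (L + Pi.single i 1 : Fin r → ℕ) j = L j := fun j hj => by simp [hj]
  have hKne := topK_nonempty hr L
  by_cases hiK : L i = topM L
  · have hM : topM (L + Pi.single i 1) = topM L + 1 := by
      refine topM_eq _ _ i (by rw [hi', hiK]) fun j => ?_
      by_cases hj : j = i
      · rw [hj, hi', hiK]
      · rw [hj' j hj]; exact (le_topM L j).trans (Nat.le_succ _)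
    have hK : topK (L + Pi.single i 1) = {i} := by
      ext j
      simp only [topK, hM, Finset.mem_filter, Finset.mem_univ, true_and, Finset.mem_singleton]
      constructor
      · intro h
        by_contra hj
        rw [hj' j hj] at h
        have := le_topM L j
        omega
      · rintro rfl
        rw [hi', hiK]
    have e1 : surv t α (L + Pi.single i 1) ≤ t (topM L + 1) := by
      unfold surv
      rw [hM, hK, hsing]
      refine mul_le_of_le_one_right (h0 _).le (Finset.prod_le_one (fun j _ => ?_) (fun j _ => ?_))
      · split_ifs
        · exact zero_le_one
        · exact (h0 _).le
      · split_ifs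
        · exact le_rfl
        · exact ht1 _
    have e2 : α (topM L) (topK L) * t (topM L) ^ r ≤ surv t α L := by
      unfold surv
      refine mul_le_mul_of_nonneg_left ?_ (hα _ _ hKne).le
      calc t (topM L) ^ r = ∏ _j : Fin r, t (topM L) := by simp
        _ ≤ _ := by
          refine Finset.prod_le_prod (fun _ _ => (h0 _).le) fun j _ => ?_
          split_ifs
          · exact ht1 _
          · exact hanti (le_topM L j)
    have := ca (topM L) _ hKne
    nlinarith
  · have hlt : L i < topM L := lt_of_le_of_ne (le_topM L i) hiK
    obtain ⟨i₀, hi₀⟩ := hKne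
    have hi₀' : L i₀ = topM L := by simpa [topK] using hi₀
    have hne : i₀ ≠ i := by rintro rfl; exact hiK hi₀'
    have hM : topM (L + Pi.single i 1) = topM L := by
      refine topM_eq _ _ i₀ (by rw [hj' _ hne, hi₀']) fun j => ?_
      by_cases hj : j = i
      · rw [hj, hi']; omega
      · rw [hj' j hj]; exact le_topM L j
    unfold surv
    rw [hM, ← Finset.mul_prod_erase _ _ (Finset.mem_univ i),
      ← Finset.mul_prod_erase Finset.univ (fun j => if L j = topM L then 1 else t (L j))
        (Finset.mem_univ i)]
    have eR : ∏ j ∈ Finset.univ.erase i, (if (L + Pi.single i 1 : Fin r → ℕ) j = topM L then 1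
          else t ((L + Pi.single i 1 : Fin r → ℕ) j))
        = ∏ j ∈ Finset.univ.erase i, (if L j = topM L then 1 else t (L j)) := by
      refine Finset.prod_congr rfl fun j hj => ?_
      rw [hj' j (Finset.ne_of_mem_erase hj)]
    rw [eR]
    set R := ∏ j ∈ Finset.univ.erase i, (if L j = topM L then 1 else t (L j))
    have hR : 0 ≤ R := Finset.prod_nonneg fun j _ => by
      split_ifs
      · exact zero_le_one
      · exact (h0 _).le
    rw [hi', if_neg hiK, ← mul_assoc, ← mul_assoc, ← mul_assoc]
    refine mul_le_mul_of_nonneg_right ?_ hR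
    by_cases hs : L i + 1 = topM L
    · have hK : topK (L + Pi.single i 1) = insert i (topK L) := by
        ext j
        simp only [topK, hM, Finset.mem_filter, Finset.mem_univ, true_and, Finset.mem_insert]
        by_cases hj : j = i
        · subst hj; simp [hi', hs]
        · simp [hj]
      rw [if_pos hs, hK, mul_one]
      have := cb (L i) (topK L) i ⟨i₀, hi₀⟩ (by simp [topK, hiK])
      rw [hs] at this
      linarith
    · have hK : topK (L + Pi.single i 1) = topK L := by
        ext j
        simp only [topK, hM, Finset.mem_filter, Finset.mem_univ, true_and]
        by_cases hj : j = i
        · subst hj; simp [hs, hiK]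
        · simp [hj]
      rw [if_neg hs, hK]
      have := mul_le_mul_of_nonneg_left (cc (L i)) (hα (topM L) (topK L) ⟨i₀, hi₀⟩).le
      linarith

lemma core {r k : ℕ} (hr : 1 ≤ r) (hk : 1 ≤ k) (t : ℕ → ℝ) (α : ℕ → Finset (Fin r) → ℝ)
    (h0 : ∀ n, 0 < t n) (h1 : t 0 = 1) (hα0 : ∀ K, α 0 K = 1)
    (hα : ∀ n K, K.Nonempty → 0 < α n K)
    (hαk : ∀ n K, K.Nonempty → K.card ≤ k → α n K = t n ^ K.card)
    (ca : ∀ n K, K.Nonempty → ((r:ℝ) + 1) * t (n+1) ≤ α n K * t n ^ r)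
    (cb : ∀ n K i, K.Nonempty → i ∉ K →
      ((r:ℝ) + 1) * α (n+1) (insert i K) ≤ t n * α (n+1) K)
    (cc : ∀ n, ((r:ℝ) + 1) * t (n+1) ≤ t n) :
    ∃ c : Measure (Fin r → ℝ), IsCopulaOfOrder r k c ∧
      ∀ (n : ℕ) (J : Finset (Fin r)), J.Nonempty →
        (c ({v | ∀ i ∈ J, v i ≤ t n} ∩ cube r)).toReal = α n J := by
  have hr1 : (1:ℝ) ≤ r := by exact_mod_cast hr
  have hstep := surv_step hr t α h0 h1 hα
    (fun n i => by rw [hαk n {i} (Finset.singleton_nonempty i) (by simpa using hk)]; simp) ca cb cc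
  have hpos : ∀ L, 0 ≤ surv t α L := fun L =>
    mul_nonneg (hα _ _ (topK_nonempty hr L)).le (Finset.prod_nonneg fun j _ => by
      split_ifs
      · exact zero_le_one
      · exact (h0 _).le)
  have hhalf : ∀ n, t (n+1) ≤ t n * (1/2) := fun n => by nlinarith [cc n, h0 (n+1)]
  have hanti : StrictAnti t := strictAnti_nat_of_succ_lt fun n => by nlinarith [hhalf n, h0 n]
  have hlim : Tendsto t atTop (nhds 0) := by
    have hb : ∀ n, t n ≤ (1/2)^n := by
      intro n
      induction n with
      | zero => simp [h1]
      | succ n ih => rw [pow_succ]; nlinarith [hhalf n]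
    exact squeeze_zero (fun n => (h0 n).le) hb
      (tendsto_pow_atTop_nhds_zero_of_lt_one (by norm_num) (by norm_num))
  obtain ⟨P, hP⟩ := exists_levels r (surv t α) hpos hstep
  have hzero : ∀ L : Fin r → ℕ, topM L = 0 → surv t α L = 1 := by
    intro L hL
    unfold surv
    rw [hL, hα0, one_mul]
    refine Finset.prod_eq_one fun i _ => ?_
    split_ifs with h
    · rfl
    · exact absurd (Nat.le_zero.1 (hL ▸ le_topM L i)) h
  have hP1 : P Set.univ = 1 := by
    have := hP 0
    rw [hzero 0 (by simp [topM])] at this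
    rw [← ENNReal.ofReal_one, ← this]
    congr 1
    ext L; simp
  obtain ⟨c, hc, hc'⟩ := build r k t hanti h0 h1 hlim P hP1 (by
    intro J hJ l hlJ
    rw [hP]
    congr 1
    have hrest : ∏ i ∈ J, t (l i) = ∏ i, t (l i) :=
      Finset.prod_subset (Finset.subset_univ J) fun i _ hi => by rw [hlJ i hi, h1]
    rw [hrest]
    by_cases hz : topM l = 0
    · rw [hzero l hz]
      symm
      refine Finset.prod_eq_one fun i _ => ?_
      have hli : l i = 0 := Nat.le_zero.1 (hz ▸ le_topM l i)
      rw [hli, h1]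
    · have hsub : topK l ⊆ J := by
        intro i hi
        by_contra hn
        simp only [topK, Finset.mem_filter, Finset.mem_univ, true_and] at hi
        exact hz (hi ▸ hlJ i hn)
      unfold surv
      rw [hαk _ _ (topK_nonempty hr l) ((Finset.card_le_card hsub).trans hJ.le)]
      have : t (topM l) ^ (topK l).card = ∏ i, if l i = topM l then t (topM l) else 1 := by
        rw [← Finset.prod_filter, Finset.prod_const]
        rfl
      rw [this, ← Finset.prod_mul_distrib]
      refine Finset.prod_congr rfl fun i _ => ?_
      split_ifs with h
      · rw [mul_one, h]
      · rw [one_mul])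
  refine ⟨c, hc, fun n J hJ => ?_⟩
  rw [hc', hP, ENNReal.toReal_ofReal (hpos _)]
  by_cases hn : n = 0
  · subst hn
    rw [hα0]
    exact hzero _ (by simp [topM])
  · obtain ⟨j₀, hj₀⟩ := hJ
    have hM : topM (fun i => if i ∈ J then n else 0) = n := by
      refine topM_eq _ _ j₀ (by simp [hj₀]) fun j => ?_
      split_ifs
      · exact le_rfl
      · exact Nat.zero_le _
    have hK : topK (fun i => if i ∈ J then n else 0) = J := by
      ext j
      simp only [topK, hM, Finset.mem_filter, Finset.mem_univ, true_and]
      by_cases hj : j ∈ J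
      · simp [hj]
      · simp [hj, Ne.symm hn]
    unfold surv
    rw [hM, hK]
    rw [Finset.prod_eq_one, mul_one]
    intro i _
    by_cases hi : i ∈ J
    · simp [hi]
    · simp [hi, h1]

theorem stmt_2 (r k : ℕ) (hr : 1 ≤ r) (hk : 1 ≤ k) (hkr : k ≤ r)
    (b : Finset (Fin r) → ℝ) (a : ℕ → Finset (Fin r) → ℝ) (alim : Finset (Fin r) → ℝ)
    (s : ℕ → ℝ)
    -- `b` maps nonempty subsets to `(0,∞)`, `b(J) = |J|` for `|J| ≤ k`, `b` increasing
    (hb0 : ∀ J : Finset (Fin r), J.Nonempty → 0 < b J)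
    (hbk : ∀ J : Finset (Fin r), J.Nonempty → J.card ≤ k → b J = J.card)
    (hbinc : ∀ J J' : Finset (Fin r), J.Nonempty → J ⊂ J' → b J < b J')
    -- each `a_m` maps nonempty subsets to `(0,∞)` with `a_m(J) = 1` for `|J| ≤ k`
    (ha0 : ∀ m, ∀ J : Finset (Fin r), J.Nonempty → 0 < a m J)
    (hak : ∀ m, ∀ J : Finset (Fin r), J.Nonempty → J.card ≤ k → a m J = 1)
    -- `(a_m)` converges pointwise to `alim`, with values in `(0,∞)`
    (halim0 : ∀ J : Finset (Fin r), J.Nonempty → 0 < alim J)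
    (haconv : ∀ J : Finset (Fin r), J.Nonempty →
      Tendsto (fun m => a m J) atTop (nhds (alim J)))
    -- `(s_m)` is a sequence in `(0,1)` with `s_m → 0`
    (hs : ∀ m, s m ∈ Set.Ioo (0:ℝ) 1) (hs0 : Tendsto s atTop (nhds 0)) :
    ∃ φ : ℕ → ℕ, StrictMono φ ∧
      ∃ c : Measure (Fin r → ℝ), IsCopulaOfOrder r k c ∧
        ∀ n : ℕ, ∀ J : Finset (Fin r), J.Nonempty →
          (c ({v | ∀ i ∈ J, v i ≤ s (φ n)} ∩ cube r)).toReal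
            = a (φ n) J * (s (φ n)) ^ (b J) := by
  classical
  -- conditions on the next index, given the previous scale `T` and coefficients `A`
  have hev : ∀ (T : ℝ) (A : Finset (Fin r) → ℝ), 0 < T → (∀ K, K.Nonempty → 0 < A K) →
      ∀ᶠ N in atTop, (∀ K, K.Nonempty → ((r:ℝ) + 1) * s N ≤ A K * T ^ r) ∧
        (∀ K i, K.Nonempty → i ∉ K → ((r:ℝ) + 1) * (a N (insert i K) * s N ^ b (insert i K))
          ≤ T * (a N K * s N ^ b K)) ∧ ((r:ℝ) + 1) * s N ≤ T := by
    intro T A hT hA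
    have hs1 : Tendsto (fun N => ((r:ℝ) + 1) * s N) atTop (nhds 0) := by
      simpa using hs0.const_mul ((r:ℝ) + 1)
    refine (eventually_all.2 fun K => ?_).and ((eventually_all.2 fun K => eventually_all.2 fun i => ?_).and ?_)
    · by_cases hK : K.Nonempty
      · have hp : 0 < A K * T ^ r := mul_pos (hA K hK) (pow_pos hT r)
        filter_upwards [hs1.eventually (gt_mem_nhds hp)] with N hN _ using hN.le
      · exact Eventually.of_forall fun N h => absurd h hK
    · by_cases hK : K.Nonempty
      · by_cases hi : i ∈ K
        · exact Eventually.of_forall fun N _ h => absurd hi h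
        · have hlt : b K < b (insert i K) := hbinc K _ hK (Finset.ssubset_insert hi)
          have hpw : Tendsto (fun N => s N ^ (b (insert i K) - b K)) atTop (nhds 0) := by
            have hc : ContinuousAt (fun x : ℝ => x ^ (b (insert i K) - b K)) 0 :=
              Real.continuousAt_rpow_const _ _ (Or.inr (by linarith))
            have := hc.tendsto.comp hs0
            rwa [Real.zero_rpow (by linarith)] at this
          have h1 : Tendsto (fun N => ((r:ℝ) + 1) * a N (insert i K) * s N ^ (b (insert i K) - b K))
              atTop (nhds 0) := by
            simpa using ((haconv _ (Finset.insert_nonempty i K)).const_mul ((r:ℝ) + 1)).mul hpw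
          have h2 : Tendsto (fun N => T * a N K) atTop (nhds (T * alim K)) :=
            (haconv K hK).const_mul T
          filter_upwards [h1.eventually_lt h2 (mul_pos hT (halim0 K hK))] with N hN _ _
          have hsN := (hs N).1
          have e : s N ^ b (insert i K) = s N ^ (b (insert i K) - b K) * s N ^ b K := by
            rw [← Real.rpow_add hsN]; congr 1; ring
          rw [e]
          have := mul_le_mul_of_nonneg_right hN.le (Real.rpow_nonneg hsN.le (b K))
          linarith
      · exact Eventually.of_forall fun N h => absurd h hK
    · filter_upwards [hs1.eventually (gt_mem_nhds hT)] with N hN using hN.le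
  have hαpos : ∀ m K, K.Nonempty → 0 < a m K * s m ^ b K := fun m K hK =>
    mul_pos (ha0 m K hK) (Real.rpow_pos_of_pos (hs m).1 _)
  obtain ⟨g0, hg0⟩ := (hev 1 (fun _ => 1) one_pos (fun _ _ => one_pos)).exists
  have hnext := fun m => ((hev (s m) (fun K => a m K * s m ^ b K) (hs m).1 (hαpos m)).and
    (eventually_gt_atTop m)).exists
  choose g hg using hnext
  let φ : ℕ → ℕ := fun n => Nat.rec g0 (fun _ m => g m) n
  have hφs : ∀ n, φ (n+1) = g (φ n) := fun n => rfl
  have hφ0 : φ 0 = g0 := rfl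
  refine ⟨φ, strictMono_nat_of_lt_succ fun n => by rw [hφs]; exact (hg (φ n)).2, ?_⟩
  let t : ℕ → ℝ := fun n => Nat.casesOn n 1 (fun m => s (φ m))
  let α : ℕ → Finset (Fin r) → ℝ := fun n K => Nat.casesOn n 1 (fun m => a (φ m) K * s (φ m) ^ b K)
  have hcond : ∀ n, (∀ K, K.Nonempty → ((r:ℝ) + 1) * t (n+1) ≤ α n K * t n ^ r) ∧
        (∀ K i, K.Nonempty → i ∉ K → ((r:ℝ) + 1) * α (n+1) (insert i K)
          ≤ t n * α (n+1) K) ∧ ((r:ℝ) + 1) * t (n+1) ≤ t n := by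
    intro n
    cases n with
    | zero => exact hg0
    | succ n => exact (hg (φ n)).1
  obtain ⟨c, hc, hc'⟩ := core (k := k) hr hk t α
    (by
      intro n
      cases n with
      | zero => exact one_pos
      | succ n => exact (hs _).1)
    rfl (fun _ => rfl)
    (by
      intro n K hK
      cases n with
      | zero => exact one_pos
      | succ n => exact hαpos _ K hK)
    (by
      intro n K hK hKk
      cases n with
      | zero => simp [t, α]
      | succ n =>
        change a (φ n) K * s (φ n) ^ b K = s (φ n) ^ K.card
        rw [hak _ K hK hKk, hbk K hK hKk, one_mul, Real.rpow_natCast])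
    (fun n => (hcond n).1) (fun n => (hcond n).2.1) (fun n => (hcond n).2.2)
  exact ⟨c, hc, fun n J hJ => hc' (n+1) J hJ⟩
end
end
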